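/- There exists n₀ ∈ ℕ such that for all n ≥ n₀ the following holds: if K, T ⊆ ℝ^n are convex bodies with 0 ∈ K and T centrally symmetric, then N(T,K) ≤ 49^n · N(K*, T*). -/

import Mathlib

/-!
Write `N = N(K*, T*)`, assumed finite. Then `K*` is bounded, so the origin is interior to `K`, and
`S = K ∩ -K ∩ T` is a symmetric convex body contained in `K` and in `T`. Packing translates of `S / 2`
gives `N(T, K) ≤ N(T, S) ≤ 3 ^ n * vol T / vol S`. By duality `S*` lies in the difference body of
`M = K* + T*`, whence `vol S* ≤ 4 ^ n * vol M` by a weak Rogers–Shephard inequality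
(`volume_sub_le`), while `M` is covered by `N` translates of `2 T*`, so that
`vol M ≤ N * 2 ^ n * vol T*`. The Bourgain–Milman inequality with the constant `π`, namely
`n! * vol S * vol S* ≥ π ^ n` (`bourgain_milman`, up to a factor arbitrarily close to one), turns the
bound into `N(T, K) ≤ N * (3 * 4 * 2 / π) ^ n * n! * vol T * vol T*`. Finally the Blaschke–Santaló
inequality (`santalo`) bounds `vol T * vol T*` by the square of the volume of the unit ball, and
`n! * (vol B) ^ 2 ≤ (2 * π) ^ n` for `n ≥ 3` (`factorial_mul_volume_ball_sq`). The product of the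
constants is `3 * 4 * 2 * 2 = 48`, and `49` leaves room for the loss in the lower volume bound.

*Blaschke–Santaló.* Steiner symmetrization of `T` in a coordinate direction is accompanied by an
operation on the dual set that keeps all pairings at most `1` and, by Brunn–Minkowski, does not
decrease its volume. After all `n` coordinates both sets are unconditional, and the claim becomes a
multiplicative Prékopa–Leindler inequality on the positive orthant, proved in exponential
coordinates.

*Bourgain–Milman.* Let `F` be a smooth, Lipschitz and strongly monotone field on `ℝⁿ` with `F 0 = 0`.
For small real `ε` the map `psi F ε`, a combination of `a`, `b`, `F a`, `F b` on pairs `(a, b)`, is a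
diffeomorphism of `ℝⁿ × ℝⁿ`, so that pulling back the Gaussian gives an integral with the constant
value `(2 * π) ^ n`. The integral is analytic in `ε` on a neighbourhood of the segment from `0` to `I`,
so the value is the same at `ε = I`. There the Jacobian is `2 ^ (-n) * det (F' a + F' b)`, which is up
to a constant the Jacobian of `theta F : (a, b) ↦ ((a + b) / 2, (F a - F b) / 2)`, and the modulus of
the Gaussian is `exp (-(⟪F a, a⟫ + ⟪F b, b⟫) / 2)`. Taking absolute values and changing variables by
the injective map `theta F` gives `∫ G ≥ π ^ n` for every `G` whose value at `theta F (a, b)` dominates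
that exponential (`pi_pow_le_lintegral`).

This is applied to the gradient of `s⁻¹ * log ∑ cosh (s * ⟪y, x⟫)` plus `δ` times the identity, where
`y` runs over finitely many points of `S*` whose maximum `max |⟪y, x⟫|` nearly equals the gauge of
`S`. The log-sum part of the half-difference lies in `S*` and `⟪F a, a⟫` nearly dominates
`max |⟪y, a⟫|`, so `G` may be taken as a product of `exp (-gauge)` in the first variable and
`exp (-dist ^ 2 / δ)` in the second, with the distance to `S*`. As `s → ∞` and `δ → 0` the two integrals
become at most `n! * vol S` and `vol S*`.
-/

open MeasureTheory Pointwise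
open scoped ENNReal RealInnerProductSpace

noncomputable section

abbrev Euc (n : ℕ) := EuclideanSpace ℝ (Fin n)

/-- A convex body: a compact convex set with nonempty interior. -/
def IsConvexBody {n : ℕ} (K : Set (Euc n)) : Prop :=
  Convex ℝ K ∧ IsCompact K ∧ (interior K).Nonempty

/-- The covering number `N(K,T)`: the least cardinality of a finite set `Λ`
with `K ⊆ Λ + T`.  It is `⊤` if no finite cover exists. -/
def coveringNumber {n : ℕ} (K T : Set (Euc n)) : ℕ∞ :=
  sInf {m : ℕ∞ | ∃ Λ : Finset (Euc n), (Λ.card : ℕ∞) = m ∧ K ⊆ ↑Λ + T}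

/-- The polar body `K* = {x : ⟨x,y⟩ ≤ 1 for all y ∈ K}`. -/
def polarBody {n : ℕ} (K : Set (Euc n)) : Set (Euc n) :=
  {x | ∀ y ∈ K, ⟪x, y⟫ ≤ 1}

/-! ### The Brunn–Minkowski and Prékopa–Leindler inequalities -/

/-- The one-dimensional Brunn–Minkowski inequality for compact sets: the translates of `A` by
`min B` and of `B` by `max A` lie in `A + B` and meet in one point. -/
theorem bm_compact {A B : Set ℝ} (hA : IsCompact A) (hB : IsCompact B)
    (hA0 : A.Nonempty) (hB0 : B.Nonempty) : volume A + volume B ≤ volume (A + B) := by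
  obtain ⟨a, haA, ha⟩ := hA.exists_isGreatest hA0
  obtain ⟨b, hbB, hb⟩ := hB.exists_isLeast hB0
  have h1 : volume ((fun x => b + x) '' A) = volume A := by
    rw [Set.image_add_left]; exact measure_preimage_add _ _ _
  have h2 : volume ((fun x => a + x) '' B) = volume B := by
    rw [Set.image_add_left]; exact measure_preimage_add _ _ _
  have hd : AEDisjoint volume ((fun x => b + x) '' A) ((fun x => a + x) '' B) := by
    refine measure_mono_null (t := {a + b}) ?_ (by simp)
    rintro _ ⟨⟨x, hx, rfl⟩, ⟨y, hy, hxy⟩⟩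
    have := ha hx
    have := hb hy
    simp only [Set.mem_singleton_iff] at *
    linarith
  have hm : MeasurableSet ((fun x => a + x) '' B) := by
    exact (hB.image (continuous_const.add continuous_id)).measurableSet
  rw [← h1, ← h2, ← measure_union₀ hm.nullMeasurableSet hd]
  refine measure_mono ?_
  rintro _ (⟨x, hx, rfl⟩ | ⟨x, hx, rfl⟩)
  · exact ⟨x, hx, b, hbB, add_comm _ _⟩
  · exact ⟨a, haA, x, hx, rfl⟩

/-- The one-dimensional Brunn–Minkowski inequality, for midpoints. -/
theorem bm_midpoint {A B C : Set ℝ} (hA : MeasurableSet A) (hB : MeasurableSet B)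
    (hA0 : A.Nonempty) (hB0 : B.Nonempty) (hC : ∀ a ∈ A, ∀ b ∈ B, (a + b) / 2 ∈ C) :
    volume A + volume B ≤ 2 * volume C := by
  have key : volume A + volume B ≤ volume (A + B) := by
    obtain ⟨a, ha⟩ := hA0
    obtain ⟨b, hb⟩ := hB0
    rw [hA.measure_eq_iSup_isCompact, hB.measure_eq_iSup_isCompact]
    simp only [iSup_and']
    have : Nonempty {K : Set ℝ // K ⊆ A ∧ IsCompact K} := ⟨⟨∅, by simp⟩⟩
    have : Nonempty {K : Set ℝ // K ⊆ B ∧ IsCompact K} := ⟨⟨∅, by simp⟩⟩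
    rw [iSup_subtype', iSup_subtype']
    refine ENNReal.iSup_add_iSup_le ?_
    rintro ⟨K, hK, hKc⟩ ⟨L, hL, hLc⟩
    calc volume K + volume L ≤ volume (insert a K) + volume (insert b L) :=
          add_le_add (measure_mono (Set.subset_insert _ _)) (measure_mono (Set.subset_insert _ _))
      _ ≤ volume (insert a K + insert b L) :=
          bm_compact (hKc.insert a) (hLc.insert b) (Set.insert_nonempty _ _)
            (Set.insert_nonempty _ _)
      _ ≤ _ := measure_mono (Set.add_subset_add (Set.insert_subset ha hK)
          (Set.insert_subset hb hL))
  refine key.trans ?_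
  have : A + B ⊆ (2 : ℝ) • C := by
    rintro _ ⟨x, hx, y, hy, rfl⟩
    exact ⟨_, hC x hx y hy, by simp; ring⟩
  refine (measure_mono this).trans ?_
  rw [Measure.addHaar_smul]
  simp

theorem four_mul_le_sq (a b : ℝ≥0∞) {c : ℝ≥0∞} (h : a + b ≤ 2 * c) : a * b ≤ c ^ 2 := by
  have hab : 4 * (a * b) ≤ 4 * c ^ 2 := by
    calc 4 * (a * b) ≤ (a + b) ^ 2 := by
          by_cases ha : a = ∞
          · subst ha; simp
          by_cases hb : b = ∞
          · subst hb; simp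
          lift a to NNReal using ha
          lift b to NNReal using hb
          norm_cast
          rw [← NNReal.coe_le_coe]
          push_cast
          nlinarith [sq_nonneg ((a : ℝ) - b)]
      _ ≤ (2 * c) ^ 2 := by gcongr
      _ = 4 * c ^ 2 := by ring
  exact (ENNReal.mul_le_mul_iff_right (by simp) (by simp)).1 hab

/-- The Prékopa–Leindler inequality on the line for functions with supremum one. -/
theorem pl_one_normalized {f g h : ℝ → ℝ≥0∞} (hf : Measurable f) (hg : Measurable g)
    (hh : Measurable h) (hfg : ∀ x y, f x * g y ≤ h ((x + y) / 2) ^ 2)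
    (hf1 : ∀ x, f x ≤ 1) (hg1 : ∀ x, g x ≤ 1)
    (hf2 : ∀ t < 1, ∃ x, t < f x) (hg2 : ∀ t < 1, ∃ x, t < g x) :
    (∫⁻ x, f x) * (∫⁻ x, g x) ≤ (∫⁻ x, h x) ^ 2 := by
  have layer : ∀ k : ℝ → ℝ≥0∞, Measurable k → (∀ x, k x ≤ 1) →
      ∫⁻ x, k x = ∫⁻ t in Set.Ioo (0 : ℝ) 1, volume {x | ENNReal.ofReal t < k x} := by
    intro k hk hk1
    have hkt : ∀ x, k x ≠ ∞ := fun x => ((hk1 x).trans_lt ENNReal.one_lt_top).ne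
    have e : ∫⁻ x, k x = ∫⁻ x, ENNReal.ofReal ((k x).toReal) := by
      simp [ENNReal.ofReal_toReal, hkt]
    rw [e, lintegral_eq_lintegral_meas_lt volume
      (Filter.Eventually.of_forall fun x => ENNReal.toReal_nonneg) hk.ennreal_toReal.aemeasurable]
    have e2 : ∀ t ∈ Set.Ioi (0 : ℝ), volume {x | t < (k x).toReal}
        = volume {x | ENNReal.ofReal t < k x} := by
      intro t ht
      congr 1
      ext x
      exact (ENNReal.ofReal_lt_iff_lt_toReal (le_of_lt ht) (hkt x)).symm
    rw [setLIntegral_congr_fun measurableSet_Ioi e2]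
    rw [← lintegral_indicator measurableSet_Ioi, ← lintegral_indicator measurableSet_Ioo]
    congr 1
    ext t
    by_cases ht' : t ∈ Set.Ioo (0 : ℝ) 1
    · rw [Set.indicator_of_mem ht', Set.indicator_of_mem (show t ∈ Set.Ioi (0 : ℝ) from ht'.1)]
    rw [Set.indicator_of_notMem ht', Set.indicator_apply_eq_zero]
    intro ht
    have ht1 : 1 ≤ t := by
      by_contra hlt
      exact ht' ⟨ht, not_le.1 hlt⟩
    have : {x | ENNReal.ofReal t < k x} = ∅ := by
      ext x
      simp only [Set.mem_ofPred_eq, Set.mem_empty_iff_false, iff_false, not_lt]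
      exact (hk1 x).trans (by simpa using ENNReal.ofReal_le_ofReal ht1)
    simp [this]
  -- Additive form: the superlevel sets of `f` and `g` below the common supremum are nonempty, so the
  -- one-dimensional Brunn–Minkowski inequality applies at each level.
  apply four_mul_le_sq
  calc (∫⁻ x, f x) + (∫⁻ x, g x)
      ≤ 2 * ∫⁻ x, min (h x) 1 := by
        rw [layer f hf hf1, layer g hg hg1, layer _ (hh.min measurable_const)
          (fun x => min_le_right _ _), ← lintegral_add_left', ← lintegral_const_mul' _ _ (by simp)]
        · refine setLIntegral_mono' measurableSet_Ioo ?_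
          intro t ht
          have ht1 : ENNReal.ofReal t < 1 := by simpa using ht.2
          refine bm_midpoint (measurableSet_lt measurable_const hf)
            (measurableSet_lt measurable_const hg) (hf2 _ ht1) (hg2 _ ht1) ?_
          intro a ha b hb
          simp only [Set.mem_ofPred_eq, lt_min_iff] at *
          refine ⟨?_, ht1⟩
          refine lt_of_pow_lt_pow_left' 2 (lt_of_lt_of_le ?_ (hfg a b))
          rw [sq]
          exact ENNReal.mul_lt_mul ha hb
        · refine Antitone.measurable ?_ |>.aemeasurable
          intro s t hst
          exact measure_mono fun x hx => lt_of_le_of_lt (ENNReal.ofReal_le_ofReal hst) hx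
    _ ≤ 2 * ∫⁻ x, h x := by
        gcongr
        exact min_le_left _ _

theorem pl_one_bounded {f g h : ℝ → ℝ≥0∞} (hf : Measurable f) (hg : Measurable g)
    (hh : Measurable h) (hfg : ∀ x y, f x * g y ≤ h ((x + y) / 2) ^ 2)
    (hf1 : (⨆ x, f x) ≠ ∞) (hg1 : (⨆ x, g x) ≠ ∞) :
    (∫⁻ x, f x) * (∫⁻ x, g x) ≤ (∫⁻ x, h x) ^ 2 := by
  set M := ⨆ x, f x with hM
  set N := ⨆ x, g x with hN
  by_cases hM0 : M = 0
  · have : ∀ x, f x = 0 := fun x => le_antisymm ((le_iSup f x).trans hM0.le) bot_le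
    simp [this]
  by_cases hN0 : N = 0
  · have : ∀ x, g x = 0 := fun x => le_antisymm ((le_iSup g x).trans hN0.le) bot_le
    simp [this]
  set R := (M * N) ^ (1 / 2 : ℝ) with hR
  have hR2 : R ^ 2 = M * N := by
    rw [hR, ← ENNReal.rpow_natCast, ← ENNReal.rpow_mul]; simp
  have hMN0 : M * N ≠ 0 := mul_ne_zero hM0 hN0
  have hMNt : M * N ≠ ∞ := ENNReal.mul_ne_top hf1 hg1
  have scal : ∀ (k : ℝ → ℝ≥0∞) (S : ℝ≥0∞), S ≠ 0 → S ≠ ∞ → (⨆ x, k x) = S →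
      (∀ x, k x / S ≤ 1) ∧ ∀ t < 1, ∃ x, t < k x / S := by
    intro k S h0 ht hk
    refine ⟨fun x => ENNReal.div_le_of_le_mul (by simpa using hk ▸ le_iSup k x), ?_⟩
    intro t ht1
    have : t * S < ⨆ x, k x := by
      rw [hk]
      calc t * S < 1 * S := (ENNReal.mul_lt_mul_iff_left h0 ht).2 ht1
        _ = S := one_mul S
    obtain ⟨x, hx⟩ := lt_iSup_iff.1 this
    exact ⟨x, (ENNReal.lt_div_iff_mul_lt (Or.inl h0) (Or.inl ht)).2 hx⟩
  obtain ⟨f1, f2⟩ := scal f M hM0 hf1 rfl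
  obtain ⟨g1, g2⟩ := scal g N hN0 hg1 rfl
  have key := pl_one_normalized (f := fun x => f x / M) (g := fun x => g x / N)
    (h := fun x => h x / R) (hf.div_const _) (hg.div_const _) (hh.div_const _) (by
      intro x y
      simp only [div_eq_mul_inv]
      rw [mul_pow, ← ENNReal.inv_pow, hR2, ENNReal.mul_inv (Or.inl hM0) (Or.inl hf1)]
      calc f x * M⁻¹ * (g y * N⁻¹) = (f x * g y) * (M⁻¹ * N⁻¹) := by ring
        _ ≤ _ := by gcongr; exact hfg x y) f1 g1 f2 g2
  simp only [div_eq_mul_inv] at key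
  rw [lintegral_mul_const _ hf, lintegral_mul_const _ hg, lintegral_mul_const _ hh, mul_pow,
    ← ENNReal.inv_pow, hR2] at key
  have e : (∫⁻ x, f x) * M⁻¹ * ((∫⁻ x, g x) * N⁻¹)
      = (∫⁻ x, f x) * (∫⁻ x, g x) * (M * N)⁻¹ := by
    rw [ENNReal.mul_inv (Or.inl hM0) (Or.inl hf1)]; ring
  rw [e] at key
  exact (ENNReal.mul_le_mul_iff_left (ENNReal.inv_ne_zero.2 hMNt)
    (ENNReal.inv_ne_top.2 hMN0)).1 key

theorem pl_one {f g h : ℝ → ℝ≥0∞} (hf : Measurable f) (hg : Measurable g)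
    (hh : Measurable h) (hfg : ∀ x y, f x * g y ≤ h ((x + y) / 2) ^ 2) :
    (∫⁻ x, f x) * (∫⁻ x, g x) ≤ (∫⁻ x, h x) ^ 2 := by
  have trunc : ∀ k : ℝ → ℝ≥0∞, Measurable k →
      ∫⁻ x, k x = ⨆ m : ℕ, ∫⁻ x, min (k x) m := by
    intro k hk
    rw [← lintegral_iSup (fun m => hk.min measurable_const)]
    · congr 1
      ext x
      rw [← inf_iSup_eq]
      simp [ENNReal.iSup_natCast]
    · intro m m' hm x
      dsimp
      gcongr
  rw [trunc f hf, trunc g hg, ENNReal.iSup_mul]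
  refine iSup_le fun m => ?_
  rw [ENNReal.mul_iSup]
  refine iSup_le fun m' => ?_
  refine pl_one_bounded (hf.min measurable_const) (hg.min measurable_const) hh ?_ ?_ ?_
  · intro x y
    exact (mul_le_mul' (min_le_left _ _) (min_le_left _ _)).trans (hfg x y)
  · exact ((iSup_le fun x => min_le_right _ _).trans_lt (ENNReal.natCast_lt_top m)).ne
  · exact ((iSup_le fun x => min_le_right _ _).trans_lt (ENNReal.natCast_lt_top m')).ne

/-- The Prékopa–Leindler inequality on `ℝⁿ` with equal weights. -/
theorem pl_pi (n : ℕ) : ∀ {f g h : (Fin n → ℝ) → ℝ≥0∞}, Measurable f → Measurable g →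
    Measurable h → (∀ x y, f x * g y ≤ h ((2⁻¹ : ℝ) • (x + y)) ^ 2) →
    (∫⁻ x, f x) * (∫⁻ x, g x) ≤ (∫⁻ x, h x) ^ 2 := by
  induction n with
  | zero =>
    intro f g h _ _ _ hfg
    simp only [lintegral_unique, volume_pi]
    have := hfg default default
    rw [Subsingleton.elim ((2⁻¹ : ℝ) • ((default : Fin 0 → ℝ) + default)) default] at this
    simp
    convert this
  | succ n ih =>
    intro f g h hf hg hh hfg
    let e := (MeasurableEquiv.piFinSuccAbove (fun _ : Fin (n + 1) => ℝ) 0).symm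
    have he : MeasurePreserving e :=
      (volume_preserving_piFinSuccAbove (fun _ : Fin (n + 1) => ℝ) 0).symm
    have fub : ∀ k : (Fin (n + 1) → ℝ) → ℝ≥0∞, Measurable k →
        ∫⁻ x, k x = ∫⁻ s : ℝ, ∫⁻ y : Fin n → ℝ, k (e (s, y)) := by
      intro k hk
      rw [← he.lintegral_comp hk, Measure.volume_eq_prod, lintegral_prod]
      exact (hk.comp e.measurable).aemeasurable
    have mk : ∀ k : (Fin (n + 1) → ℝ) → ℝ≥0∞, Measurable k → Measurable fun s : ℝ =>
        ∫⁻ y : Fin n → ℝ, k (e (s, y)) := fun k hk =>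
      (hk.comp e.measurable).lintegral_prod_right'
    rw [fub f hf, fub g hg, fub h hh]
    refine pl_one (mk f hf) (mk g hg) (mk h hh) ?_
    intro s r
    have ms : ∀ (k : (Fin (n + 1) → ℝ) → ℝ≥0∞) (s : ℝ), Measurable k →
        Measurable fun y => k (e (s, y)) := fun k s hk =>
      hk.comp (e.measurable.comp (measurable_const.prodMk measurable_id))
    refine ih (ms f s hf) (ms g r hg) (ms h _ hh) ?_
    intro x y
    refine (hfg _ _).trans_eq ?_
    congr 2
    have : ∀ (s : ℝ) (x : Fin n → ℝ), e (s, x) = Fin.cons s x := by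
      intro s x
      simp [e, MeasurableEquiv.piFinSuccAbove, Fin.insertNthEquiv]
    rw [this, this, this]
    ext i
    refine Fin.cases ?_ (fun j => ?_) i <;> simp <;> ring

/-! ### Steiner symmetrization of a dual pair -/

/-- The multiplicative Brunn–Minkowski inequality for midpoints. -/
theorem bm_pi {n : ℕ} {A B C : Set (Fin n → ℝ)} (hA : MeasurableSet A) (hB : MeasurableSet B)
    (hC : MeasurableSet C) (h : ∀ a ∈ A, ∀ b ∈ B, (2⁻¹ : ℝ) • (a + b) ∈ C) :
    volume A * volume B ≤ volume C ^ 2 := by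
  have := pl_pi n (f := A.indicator 1) (g := B.indicator 1) (h := C.indicator 1)
    (measurable_one.indicator hA) (measurable_one.indicator hB) (measurable_one.indicator hC) (by
      intro x y
      by_cases hx : x ∈ A
      · by_cases hy : y ∈ B
        · have := h x hx y hy
          rw [Set.indicator_of_mem this]
          simp [hx, hy]
        · simp [hy]
      · simp [hx])
  simpa [lintegral_indicator_one, hA, hB, hC] using this

/-- Reflection in the `k`-th coordinate hyperplane. -/
def reflCoord {n : ℕ} (k : Fin n) (x : Fin n → ℝ) : Fin n → ℝ := Function.update x k (-x k)

/-- The Steiner symmetral of `T` in the direction of the `i`-th coordinate, written as the set of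
all half-differences along lines in that direction. -/
def steinerT {n : ℕ} (i : Fin n) (T : Set (Fin n → ℝ)) : Set (Fin n → ℝ) :=
  (fun p : (Fin n → ℝ) × (Fin n → ℝ) => Function.update p.1 i ((p.1 i - p.2 i) / 2)) ''
    ((T ×ˢ T) ∩ {p | ∀ j, j ≠ i → p.1 j = p.2 j})

/-- The operation on the polar side that accompanies `steinerT`: midpoints of points lying in
opposite slices orthogonal to the `i`-th coordinate. -/
def steinerY {n : ℕ} (i : Fin n) (Y : Set (Fin n → ℝ)) : Set (Fin n → ℝ) :=
  (fun p : (Fin n → ℝ) × (Fin n → ℝ) => Function.update ((2⁻¹ : ℝ) • (p.1 + p.2)) i (p.1 i)) ''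
    ((Y ×ˢ Y) ∩ {p | p.2 i = -p.1 i})

section
variable {n : ℕ} {i k : Fin n} {T Y : Set (Fin n → ℝ)}

theorem steinerT_compact (hT : IsCompact T) : IsCompact (steinerT i T) := by
  refine ((hT.prod hT).inter_right ?_).image (by fun_prop)
  simp only [Set.ofPred_forall]
  exact isClosed_iInter fun j => isClosed_iInter fun _ =>
    isClosed_eq (by fun_prop) (by fun_prop)

theorem steinerY_compact (hY : IsCompact Y) : IsCompact (steinerY i Y) := by
  refine ((hY.prod hY).inter_right ?_).image (by fun_prop)
  exact isClosed_eq (by fun_prop) (by fun_prop)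

/-- The two operations preserve the polarity constraint: the pairing of a half-difference with a
midpoint is the average of two of the original pairings. -/
theorem steiner_pairing (h : ∀ x ∈ T, ∀ y ∈ Y, ∑ j, x j * y j ≤ 1) :
    ∀ x ∈ steinerT i T, ∀ y ∈ steinerY i Y, ∑ j, x j * y j ≤ 1 := by
  rintro _ ⟨⟨u, v⟩, ⟨⟨hu, hv⟩, huv⟩, rfl⟩ _ ⟨⟨y, z⟩, ⟨⟨hy, hz⟩, hyz⟩, rfl⟩
  simp only [Set.mem_ofPred_eq] at huv hyz hu hv hy hz ⊢
  have h1 := h u hu y hy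
  have h2 := h v hv z hz
  have : ∑ j, Function.update u i ((u i - v i) / 2) j *
      Function.update ((2⁻¹ : ℝ) • (y + z)) i (y i) j
      = 2⁻¹ * (∑ j, u j * y j + ∑ j, v j * z j) := by
    rw [← Finset.sum_add_distrib, Finset.mul_sum]
    refine Finset.sum_congr rfl fun j _ => ?_
    by_cases hj : j = i
    · subst hj
      simp [hyz]; ring
    · simp [hj, ← huv j hj]; ring
  rw [this]
  linarith

theorem steinerT_refl_self : ∀ x ∈ steinerT i T, reflCoord i x ∈ steinerT i T := by
  rintro _ ⟨⟨u, v⟩, ⟨⟨hu, hv⟩, huv⟩, rfl⟩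
  refine ⟨⟨v, u⟩, ⟨⟨hv, hu⟩, fun j hj => (huv j hj).symm⟩, ?_⟩
  ext j
  by_cases hj : j = i
  · subst hj; simp [reflCoord]; ring
  · simp only [reflCoord, ne_eq, hj, not_false_eq_true, Function.update_of_ne]
    exact (huv j hj).symm

theorem steinerT_refl (hk : ∀ x ∈ T, reflCoord k x ∈ T) (hki : k ≠ i) :
    ∀ x ∈ steinerT i T, reflCoord k x ∈ steinerT i T := by
  rintro _ ⟨⟨u, v⟩, ⟨⟨hu, hv⟩, huv⟩, rfl⟩
  refine ⟨⟨reflCoord k u, reflCoord k v⟩, ⟨⟨hk _ hu, hk _ hv⟩, fun j hj => ?_⟩, ?_⟩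
  · by_cases hjk : j = k
    · subst hjk; simpa [reflCoord] using huv j hj
    · simpa [reflCoord, hjk] using huv j hj
  · ext j
    by_cases hj : j = i
    · subst hj; simp [reflCoord, hki.symm]
    · by_cases hjk : j = k
      · subst hjk; simp [reflCoord, hj]
      · simp [reflCoord, hj, hjk]

theorem steinerY_refl_self : ∀ x ∈ steinerY i Y, reflCoord i x ∈ steinerY i Y := by
  rintro _ ⟨⟨u, v⟩, ⟨⟨hu, hv⟩, huv⟩, rfl⟩
  simp only [Set.mem_ofPred_eq] at huv
  refine ⟨⟨v, u⟩, ⟨⟨hv, hu⟩, by simp [huv]⟩, ?_⟩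
  ext j
  by_cases hj : j = i
  · subst hj; simp [reflCoord, huv]
  · simp [reflCoord, hj]; ring

theorem steinerY_refl (hk : ∀ x ∈ Y, reflCoord k x ∈ Y) (hki : k ≠ i) :
    ∀ x ∈ steinerY i Y, reflCoord k x ∈ steinerY i Y := by
  rintro _ ⟨⟨u, v⟩, ⟨⟨hu, hv⟩, huv⟩, rfl⟩
  simp only [Set.mem_ofPred_eq] at huv
  refine ⟨⟨reflCoord k u, reflCoord k v⟩, ⟨⟨hk _ hu, hk _ hv⟩, ?_⟩, ?_⟩
  · simp [reflCoord, hki.symm, huv]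
  · ext j
    by_cases hj : j = i
    · subst hj; simp [reflCoord, hki.symm]
    · by_cases hjk : j = k
      · subst hjk; simp [reflCoord, hj]; ring
      · simp [reflCoord, hj, hjk]

theorem steinerY_neg (hY : ∀ y ∈ Y, -y ∈ Y) : ∀ y ∈ steinerY i Y, -y ∈ steinerY i Y := by
  rintro _ ⟨⟨u, v⟩, ⟨⟨hu, hv⟩, huv⟩, rfl⟩
  simp only [Set.mem_ofPred_eq] at huv
  refine ⟨⟨-u, -v⟩, ⟨⟨hY _ hu, hY _ hv⟩, by simp [huv]⟩, ?_⟩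
  ext j
  by_cases hj : j = i
  · subst hj; simp
  · simp [hj]; ring

end

/-- The Cavalieri principle for slices orthogonal to, and for lines parallel to, the `i`-th axis. -/
theorem volume_slices {n : ℕ} (i : Fin (n + 1)) {A : Set (Fin (n + 1) → ℝ)}
    (hA : MeasurableSet A) :
    volume A = (∫⁻ s : ℝ, volume {y : Fin n → ℝ | i.insertNth (α := fun _ => ℝ) s y ∈ A}) ∧
    volume A = (∫⁻ y : Fin n → ℝ, volume {s : ℝ | i.insertNth (α := fun _ => ℝ) s y ∈ A}) := by
  let e := (MeasurableEquiv.piFinSuccAbove (fun _ : Fin (n + 1) => ℝ) i).symm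
  have he : MeasurePreserving e :=
    (volume_preserving_piFinSuccAbove (fun _ : Fin (n + 1) => ℝ) i).symm
  have h1 : volume A = volume (e ⁻¹' A) := (he.measure_preimage hA.nullMeasurableSet).symm
  constructor
  · rw [h1, Measure.volume_eq_prod, Measure.prod_apply (e.measurable hA)]
    rfl
  · rw [h1, Measure.volume_eq_prod, Measure.prod_apply_symm (e.measurable hA)]
    rfl

theorem continuous_insertNth_left {n : ℕ} (i : Fin (n + 1)) (y : Fin n → ℝ) :
    Continuous fun s : ℝ => i.insertNth (α := fun _ => ℝ) s y :=
  Continuous.finInsertNth i continuous_id continuous_const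

theorem continuous_insertNth_right {n : ℕ} (i : Fin (n + 1)) (s : ℝ) :
    Continuous fun y : Fin n → ℝ => i.insertNth (α := fun _ => ℝ) s y :=
  Continuous.finInsertNth i continuous_const continuous_id

/-- Steiner symmetrization does not decrease volume. -/
theorem steinerT_volume {n : ℕ} (i : Fin n) {T : Set (Fin n → ℝ)} (hT : IsCompact T) :
    volume T ≤ volume (steinerT i T) := by
  obtain _ | n := n
  · exact i.elim0
  have hT' : IsCompact (steinerT i T) := steinerT_compact hT
  rw [(volume_slices i hT.measurableSet).2, (volume_slices i hT'.measurableSet).2]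
  refine lintegral_mono fun y => ?_
  have mA := (continuous_insertNth_left i y).measurable hT.measurableSet
  set A := {s : ℝ | i.insertNth (α := fun _ => ℝ) s y ∈ T} with hA
  by_cases hA0 : A.Nonempty
  · have hneg : volume (-A) = volume A := Measure.measure_neg _ _
    have := bm_midpoint (A := A) (B := -A)
      (C := {s : ℝ | i.insertNth (α := fun _ => ℝ) s y ∈ steinerT i T}) mA mA.neg hA0
      (by simpa using hA0) (by
        intro a ha b hb
        refine ⟨⟨i.insertNth (α := fun _ => ℝ) a y, i.insertNth (α := fun _ => ℝ) (-b) y⟩,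
          ⟨⟨ha, hb⟩, ?_⟩, ?_⟩
        · intro j hj
          obtain ⟨j, rfl⟩ := Fin.exists_succAbove_eq hj
          simp
        · simp)
    rw [hneg, ← two_mul] at this
    exact (ENNReal.mul_le_mul_iff_right (by simp) (by simp)).1 this
  · rw [Set.not_nonempty_iff_eq_empty.1 hA0]
    simp

/-- The accompanying operation on the polar side does not decrease the volume of a symmetric set:
this is the Brunn–Minkowski inequality for the slices at heights `s` and `-s`, which have equal
volume. -/
theorem steinerY_volume {n : ℕ} (i : Fin n) {Y : Set (Fin n → ℝ)} (hY : IsCompact Y)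
    (hneg : ∀ y ∈ Y, -y ∈ Y) : volume Y ≤ volume (steinerY i Y) := by
  obtain _ | n := n
  · exact i.elim0
  have hY' : IsCompact (steinerY i Y) := steinerY_compact hY
  rw [(volume_slices i hY.measurableSet).1, (volume_slices i hY'.measurableSet).1]
  refine lintegral_mono fun s => ?_
  have mA : ∀ s, MeasurableSet {y : Fin n → ℝ | i.insertNth (α := fun _ => ℝ) s y ∈ Y} := fun s =>
    (continuous_insertNth_right i s).measurable hY.measurableSet
  have mC := (continuous_insertNth_right i s).measurable hY'.measurableSet
  have neg_ins : ∀ (s : ℝ) (y : Fin n → ℝ), -(i.insertNth (α := fun _ => ℝ) s y)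
      = i.insertNth (α := fun _ => ℝ) (-s) (-y) := by
    intro s y
    ext j
    refine Fin.succAboveCases i ?_ (fun j => ?_) j <;> simp
  have e : {y : Fin n → ℝ | i.insertNth (α := fun _ => ℝ) (-s) y ∈ Y}
      = -{y : Fin n → ℝ | i.insertNth (α := fun _ => ℝ) s y ∈ Y} := by
    ext y
    simp only [Set.mem_neg, Set.mem_ofPred_eq]
    constructor
    · intro h
      have := hneg _ h
      rwa [neg_ins, neg_neg] at this
    · intro h
      have := hneg _ h
      rwa [neg_ins, neg_neg] at this
  have := bm_pi (mA s) (mA (-s)) mC (by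
    intro a ha b hb
    refine ⟨⟨i.insertNth (α := fun _ => ℝ) s a, i.insertNth (α := fun _ => ℝ) (-s) b⟩,
      ⟨⟨ha, hb⟩, by simp⟩, ?_⟩
    ext j
    refine Fin.succAboveCases i ?_ (fun j => ?_) j <;> simp)
  rw [e, Measure.measure_neg, ← sq] at this
  exact (ENNReal.pow_le_pow_left_iff (by norm_num)).1 this

/-! ### The Blaschke–Santaló inequality -/

/-- A dual pair can be made invariant under any set `s` of coordinate reflections without decreasing
the two volumes: symmetrization in a new coordinate keeps the symmetries already obtained. -/
theorem exists_unconditional {n : ℕ} {T Y : Set (Fin n → ℝ)} (hT : IsCompact T) (hY : IsCompact Y)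
    (hneg : ∀ y ∈ Y, -y ∈ Y) (h : ∀ x ∈ T, ∀ y ∈ Y, ∑ j, x j * y j ≤ 1) (s : Finset (Fin n)) :
    ∃ T' Y' : Set (Fin n → ℝ), IsCompact T' ∧ IsCompact Y' ∧ (∀ y ∈ Y', -y ∈ Y') ∧
      (∀ x ∈ T', ∀ y ∈ Y', ∑ j, x j * y j ≤ 1) ∧ volume T ≤ volume T' ∧ volume Y ≤ volume Y' ∧
      ∀ k ∈ s, (∀ x ∈ T', reflCoord k x ∈ T') ∧ (∀ y ∈ Y', reflCoord k y ∈ Y') := by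
  induction s using Finset.induction_on with
  | empty => exact ⟨T, Y, hT, hY, hneg, h, le_rfl, le_rfl, by simp⟩
  | insert i s his ih =>
    obtain ⟨T', Y', h1, h2, h3, h4, h5, h6, h7⟩ := ih
    refine ⟨steinerT i T', steinerY i Y', steinerT_compact h1, steinerY_compact h2,
      steinerY_neg h3, steiner_pairing h4, h5.trans (steinerT_volume i h1),
      h6.trans (steinerY_volume i h2 h3), fun k hk => ?_⟩
    by_cases hki : k = i
    · subst hki
      exact ⟨steinerT_refl_self, steinerY_refl_self⟩
    · have hks : k ∈ s := (Finset.mem_insert.1 hk).resolve_left hki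
      exact ⟨steinerT_refl (h7 k hks).1 hki, steinerY_refl (h7 k hks).2 hki⟩

theorem reflCoord_reflCoord {n : ℕ} (k : Fin n) (x : Fin n → ℝ) :
    reflCoord k (reflCoord k x) = x := by
  ext j
  by_cases hj : j = k
  · subst hj; simp [reflCoord]
  · simp [reflCoord, hj]

theorem reflCoord_measurePreserving {n : ℕ} (k : Fin n) :
    MeasurePreserving (reflCoord k : (Fin n → ℝ) → Fin n → ℝ) := by
  have := volume_preserving_pi (α' := fun _ : Fin n => ℝ) (β' := fun _ => ℝ)
    (f := fun i => if i = k then Neg.neg else id) (by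
      intro i
      by_cases h : i = k
      · simpa [h] using Measure.measurePreserving_neg (volume : Measure ℝ)
      · simpa [h] using MeasurePreserving.id _)
  convert this using 2 with x
  ext j
  by_cases hj : j = k
  · subst hj; simp [reflCoord]
  · simp [reflCoord, hj]

theorem volume_orthant_step {n : ℕ} (i : Fin n) {A : Set (Fin n → ℝ)} (hA : MeasurableSet A)
    (h : ∀ x ∈ A, reflCoord i x ∈ A) :
    volume A = 2 * volume (A ∩ {x | 0 < x i}) := by
  have m1 : MeasurableSet {x : Fin n → ℝ | 0 < x i} :=
    measurableSet_lt measurable_const (measurable_pi_apply i)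
  rw [← measure_inter_add_sdiff A m1, two_mul]
  congr 1
  have e : reflCoord i ⁻¹' (A ∩ {x | 0 < x i}) = A ∩ {x | x i < 0} := by
    ext x
    simp only [Set.mem_preimage, Set.mem_inter_iff, Set.mem_ofPred_eq]
    refine and_congr ⟨fun hx => ?_, h x⟩ (by simp [reflCoord])
    have := h _ hx
    rwa [reflCoord_reflCoord] at this
  rw [← (reflCoord_measurePreserving i).measure_preimage (hA.inter m1).nullMeasurableSet, e]
  refine measure_congr ?_
  have h0 : volume {x : Fin n → ℝ | x i = 0} = 0 := Measure.pi_hyperplane _ i 0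
  have : ∀ᵐ x : Fin n → ℝ, x i ≠ 0 := by
    rw [ae_iff]; simpa using h0
  filter_upwards [this] with x hx
  refine propext (and_congr_right fun _ => ?_)
  change ¬ (0 < x i) ↔ x i < 0
  exact ⟨fun h => lt_of_le_of_ne (not_lt.1 h) hx, fun h => not_lt.2 h.le⟩

theorem volume_orthant {n : ℕ} {A : Set (Fin n → ℝ)} (hA : MeasurableSet A)
    (h : ∀ i, ∀ x ∈ A, reflCoord i x ∈ A) :
    volume A = 2 ^ n * volume (A ∩ {x | ∀ i, 0 < x i}) := by
  have key : ∀ s : Finset (Fin n),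
      volume A = 2 ^ s.card * volume (A ∩ {x | ∀ i ∈ s, 0 < x i}) := by
    intro s
    induction s using Finset.induction_on with
    | empty => simp
    | insert i s his ih =>
      have m : MeasurableSet {x : Fin n → ℝ | ∀ k ∈ s, 0 < x k} := by
        have : {x : Fin n → ℝ | ∀ k ∈ s, 0 < x k} = ⋂ k ∈ s, {x | 0 < x k} := by ext; simp
        rw [this]
        exact Finset.measurableSet_biInter _ fun k _ =>
          measurableSet_lt measurable_const (measurable_pi_apply k)
      rw [ih, volume_orthant_step i (hA.inter m), Finset.card_insert_of_notMem his, pow_succ,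
        mul_assoc]
      · congr 3
        ext x
        simp only [Set.mem_inter_iff, Set.mem_ofPred_eq, Finset.mem_insert, forall_eq_or_imp]
        tauto
      · rintro x ⟨hx, hx'⟩
        refine ⟨h i x hx, fun k hk => ?_⟩
        have : k ≠ i := fun e => his (e ▸ hk)
        simpa [reflCoord, this] using hx' k hk
  simpa using key Finset.univ

theorem exp_hasFDerivAt {n : ℕ} (u : Fin n → ℝ) :
    HasFDerivAt (fun u : Fin n → ℝ => fun i => Real.exp (u i))
      (ContinuousLinearMap.pi fun i => Real.exp (u i) •
        (ContinuousLinearMap.proj i : (Fin n → ℝ) →L[ℝ] ℝ)) u := by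
  rw [hasFDerivAt_pi]
  intro i
  exact (ContinuousLinearMap.hasFDerivAt
    (ContinuousLinearMap.proj i : (Fin n → ℝ) →L[ℝ] ℝ)).exp

theorem exp_det {n : ℕ} (u : Fin n → ℝ) :
    (ContinuousLinearMap.pi fun i => Real.exp (u i) •
        (ContinuousLinearMap.proj i : (Fin n → ℝ) →L[ℝ] ℝ)).det = Real.exp (∑ i, u i) := by
  have : ((ContinuousLinearMap.pi fun i => Real.exp (u i) •
        (ContinuousLinearMap.proj i : (Fin n → ℝ) →L[ℝ] ℝ)) : (Fin n → ℝ) →ₗ[ℝ] (Fin n → ℝ))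
      = Matrix.toLin' (Matrix.diagonal fun i => Real.exp (u i)) := by
    ext x i
    simp [Matrix.mulVec_diagonal]
  rw [ContinuousLinearMap.det, this, LinearMap.det_toLin', Matrix.det_diagonal, Real.exp_sum]

/-- The volume in the positive orthant, in exponential coordinates. -/
theorem volume_inter_orthant {n : ℕ} {A : Set (Fin n → ℝ)} (hA : MeasurableSet A) :
    volume (A ∩ {x | ∀ i, 0 < x i}) = ∫⁻ u : Fin n → ℝ,
      ENNReal.ofReal (Real.exp (∑ i, u i)) * A.indicator 1 (fun i => Real.exp (u i)) := by
  have := lintegral_image_eq_lintegral_abs_det_fderiv_mul volume MeasurableSet.univ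
    (fun u _ => (exp_hasFDerivAt u).hasFDerivWithinAt)
    (by
      intro u _ v _ h
      ext i
      exact Real.exp_injective (congrFun h i)) (A.indicator 1)
  simp only [exp_det, Real.abs_exp, setLIntegral_univ] at this
  rw [← this, lintegral_indicator_one hA, Measure.restrict_apply hA]
  congr 2
  ext x
  simp only [Set.mem_ofPred_eq, Set.image_univ, Set.mem_range]
  constructor
  · intro h
    exact ⟨fun i => Real.log (x i), by ext i; simp [Real.exp_log (h i)]⟩
  · rintro ⟨u, rfl⟩ i
    exact Real.exp_pos _

/-- Multiplicative form of the Prékopa–Leindler inequality for sets in the positive orthant. -/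
theorem orthant_mul {n : ℕ} {A B C : Set (Fin n → ℝ)} (hA : MeasurableSet A) (hB : MeasurableSet B)
    (hC : MeasurableSet C)
    (h : ∀ x ∈ A, ∀ y ∈ B, ∀ z : Fin n → ℝ, (∀ i, z i ^ 2 = x i * y i) → z ∈ C) :
    volume (A ∩ {x | ∀ i, 0 < x i}) * volume (B ∩ {x | ∀ i, 0 < x i})
      ≤ volume (C ∩ {x | ∀ i, 0 < x i}) ^ 2 := by
  rw [volume_inter_orthant hA, volume_inter_orthant hB, volume_inter_orthant hC]
  have mE : Measurable fun u : Fin n → ℝ => fun i => Real.exp (u i) := by fun_prop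
  have mm : ∀ {D : Set (Fin n → ℝ)}, MeasurableSet D → Measurable fun u : Fin n → ℝ =>
      ENNReal.ofReal (Real.exp (∑ i, u i)) * D.indicator 1 (fun i => Real.exp (u i)) := by
    intro D hD
    refine Measurable.mul (by fun_prop) ((measurable_one.indicator hD).comp mE)
  refine pl_pi n (mm hA) (mm hB) (mm hC) fun u v => ?_
  by_cases hu : (fun i => Real.exp (u i)) ∈ A
  · by_cases hv : (fun i => Real.exp (v i)) ∈ B
    · have hz : (fun i => Real.exp (((2⁻¹ : ℝ) • (u + v)) i)) ∈ C := by
        refine h _ hu _ hv _ fun i => ?_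
        rw [← Real.exp_add, ← Real.exp_nat_mul]
        congr 1
        simp only [Pi.smul_apply, Pi.add_apply, smul_eq_mul]
        push_cast
        ring
      rw [Set.indicator_of_mem hu, Set.indicator_of_mem hv, Set.indicator_of_mem hz]
      simp only [Pi.one_apply, mul_one]
      rw [← ENNReal.ofReal_mul (Real.exp_pos _).le, ← ENNReal.ofReal_pow (Real.exp_pos _).le,
        ← Real.exp_add, ← Real.exp_nat_mul]
      refine ENNReal.ofReal_le_ofReal (Real.exp_le_exp.2 (le_of_eq ?_))
      simp only [Pi.smul_apply, Pi.add_apply, smul_eq_mul, ← Finset.mul_sum,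
        Finset.sum_add_distrib]
      push_cast
      ring
    · simp [hv]
  · simp [hu]

/-- The Blaschke–Santaló inequality in coordinates. For an unconditional dual pair, `∑ x i * y i ≤ 1`
says that coordinatewise geometric means of points in the positive orthant lie in the unit ball. -/
theorem santalo_pi {n : ℕ} {T Y : Set (Fin n → ℝ)} (hT : IsCompact T) (hY : IsCompact Y)
    (hneg : ∀ y ∈ Y, -y ∈ Y) (h : ∀ x ∈ T, ∀ y ∈ Y, ∑ j, x j * y j ≤ 1) :
    volume T * volume Y ≤ volume {x : Fin n → ℝ | ∑ i, x i ^ 2 ≤ 1} ^ 2 := by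
  obtain ⟨T', Y', h1, h2, -, h4, h5, h6, h7⟩ := exists_unconditional hT hY hneg h Finset.univ
  have mB : MeasurableSet {x : Fin n → ℝ | ∑ i, x i ^ 2 ≤ 1} :=
    measurableSet_le (by fun_prop) measurable_const
  refine (mul_le_mul' h5 h6).trans ?_
  rw [volume_orthant h1.measurableSet fun i => (h7 i (Finset.mem_univ i)).1,
    volume_orthant h2.measurableSet fun i => (h7 i (Finset.mem_univ i)).2,
    volume_orthant mB]
  · rw [mul_mul_mul_comm, ← sq, mul_pow]
    gcongr
    refine orthant_mul h1.measurableSet h2.measurableSet mB fun x hx y hy z hz => ?_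
    simpa [hz] using h4 x hx y hy
  · intro i x hx
    have : ∀ j, reflCoord i x j ^ 2 = x j ^ 2 := by
      intro j
      by_cases hj : j = i
      · subst hj; simp [reflCoord]
      · simp [reflCoord, hj]
    simpa [this] using hx

/-- The Blaschke–Santaló inequality, for two compact sets with all inner products at most `1`, one
of them symmetric. -/
theorem santalo {n : ℕ} {T Y : Set (Euc n)} (hT : IsCompact T) (hY : IsCompact Y)
    (hneg : ∀ y ∈ Y, -y ∈ Y) (h : ∀ x ∈ T, ∀ y ∈ Y, ⟪x, y⟫ ≤ 1) :
    volume T * volume Y ≤ volume (Metric.closedBall (0 : Euc n) 1) ^ 2 := by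
  have hp := PiLp.volume_preserving_toLp (Fin n)
  have hc : Continuous (WithLp.ofLp : Euc n → Fin n → ℝ) := PiLp.continuous_ofLp 2 _
  have key : ∀ A : Set (Euc n), MeasurableSet A →
      volume A = volume ((WithLp.toLp 2 : (Fin n → ℝ) → Euc n) ⁻¹' A) := fun A hA =>
    (hp.measure_preimage hA.nullMeasurableSet).symm
  have comp : ∀ A : Set (Euc n), IsCompact A →
      IsCompact ((WithLp.toLp 2 : (Fin n → ℝ) → Euc n) ⁻¹' A) := by
    intro A hA
    have : (WithLp.toLp 2 : (Fin n → ℝ) → Euc n) ⁻¹' A = WithLp.ofLp '' A := by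
      ext x
      constructor
      · intro hx; exact ⟨_, hx, rfl⟩
      · rintro ⟨y, hy, rfl⟩; exact hy
    rw [this]
    exact hA.image hc
  rw [key T hT.measurableSet, key Y hY.measurableSet, key _ measurableSet_closedBall]
  have := santalo_pi (comp T hT) (comp Y hY) (fun y hy => hneg _ hy) (fun x hx y hy => by
    have := h _ hx _ hy
    simpa [PiLp.inner_apply, mul_comm] using this)
  convert this using 3
  ext x
  simp [EuclideanSpace.norm_eq, Real.sqrt_le_one]

/-- A lower bound for the factorial in terms of the volume of the unit ball, from the duplication
formula for the Gamma function. -/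
theorem factorial_mul_volume_ball_sq {n : ℕ} (hn : 3 ≤ n) :
    (n.factorial : ℝ≥0∞) * volume (Metric.closedBall (0 : Euc n) 1) ^ 2
      ≤ ENNReal.ofReal ((2 * Real.pi) ^ n) := by
  have : Nonempty (Fin n) := ⟨⟨0, by omega⟩⟩
  have hG : 0 < Real.Gamma (n / 2 + 1) := Real.Gamma_pos_of_pos (by positivity)
  rw [EuclideanSpace.volume_closedBall]
  simp only [Fintype.card_fin, ENNReal.ofReal_one, one_pow, one_mul]
  rw [← ENNReal.ofReal_pow (by positivity), ← ENNReal.ofReal_natCast,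
    ← ENNReal.ofReal_mul (by positivity)]
  refine ENNReal.ofReal_le_ofReal ?_
  have h1 := Real.Gamma_mul_Gamma_add_half (((n : ℝ) + 1) / 2)
  have h2 : Real.Gamma (((n : ℝ) + 1) / 2) ≤ Real.Gamma (n / 2 + 1) := by
    have h3 : (3 : ℝ) ≤ n := by exact_mod_cast hn
    exact Real.Gamma_strictMonoOn_Ici.monotoneOn (by simp; linarith) (by simp; linarith)
      (by linarith)
  rw [show ((n : ℝ) + 1) / 2 + 1 / 2 = n / 2 + 1 by ring,
    show 2 * (((n : ℝ) + 1) / 2) = n + 1 by ring, Real.Gamma_nat_eq_factorial,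
    show (1 : ℝ) - (n + 1) = -n by ring, Real.rpow_neg (by norm_num), Real.rpow_natCast] at h1
  have h4 : (n.factorial : ℝ) * √Real.pi ≤ 2 ^ n * Real.Gamma (n / 2 + 1) ^ 2 := by
    have : (n.factorial : ℝ) * √Real.pi
        = 2 ^ n * (Real.Gamma (((n : ℝ) + 1) / 2) * Real.Gamma (n / 2 + 1)) := by
      rw [h1]; field_simp
    rw [this, sq]
    gcongr
  have h5 : (1 : ℝ) ≤ √Real.pi := by
    rw [Real.one_le_sqrt]; linarith [Real.pi_gt_three]
  rw [div_pow, ← mul_div_assoc, div_le_iff₀ (by positivity), ← pow_mul, mul_comm n 2, pow_mul,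
    Real.sq_sqrt Real.pi_pos.le, mul_pow, mul_comm, mul_right_comm, mul_comm]
  gcongr
  nlinarith [Nat.cast_nonneg (α := ℝ) n.factorial]

/-! ### Analytic and linear-algebra preliminaries -/

/-- Holomorphic dependence on a parameter of an integral with a uniform integrable bound; the
derivative of the integrand is controlled by Cauchy's estimate. -/
theorem differentiableOn_integral {X : Type*} [MeasurableSpace X] {μ : Measure X} {U : Set ℂ}
    (hU : IsOpen U) {f : ℂ → X → ℂ} (hm : ∀ z ∈ U, AEStronglyMeasurable (f z) μ)
    (hd : ∀ x, DifferentiableOn ℂ (fun z => f z x) U) {g : X → ℝ} (hg : Integrable g μ)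
    (hfg : ∀ z ∈ U, ∀ x, ‖f z x‖ ≤ g x) :
    DifferentiableOn ℂ (fun z => ∫ x, f z x ∂μ) U := by
  intro z₀ hz₀
  obtain ⟨r, hr, hrU⟩ := Metric.isOpen_iff.1 hU z₀ hz₀
  have hsub : ∀ z ∈ Metric.ball z₀ (r / 2), Metric.closedBall z (r / 4) ⊆ U := by
    intro z hz w hw
    refine hrU ?_
    rw [Metric.mem_ball] at hz ⊢
    rw [Metric.mem_closedBall] at hw
    linarith [dist_triangle w z z₀]
  have hder : ∀ x, ∀ z ∈ Metric.ball z₀ (r / 2),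
      HasDerivAt (fun z => f z x) (deriv (fun z => f z x) z) z := by
    intro x z hz
    have : z ∈ U := hsub z hz (Metric.mem_closedBall_self (by positivity))
    exact ((hd x).differentiableAt (hU.mem_nhds this)).hasDerivAt
  have hbound : ∀ x, ∀ z ∈ Metric.ball z₀ (r / 2),
      ‖deriv (fun z => f z x) z‖ ≤ g x / (r / 4) := by
    intro x z hz
    refine Complex.norm_deriv_le_of_forall_mem_sphere_norm_le (by positivity) ?_ fun w hw =>
      hfg w (hsub z hz (Metric.sphere_subset_closedBall hw)) x
    refine DifferentiableOn.diffContOnCl ?_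
    rw [closure_ball _ (by positivity)]
    exact (hd x).mono (hsub z hz)
  have hmd : AEStronglyMeasurable (fun x => deriv (fun z => f z x) z₀) μ := by
    -- the derivative is a limit of difference quotients along a sequence
    let u : ℕ → ℂ := fun k => ((r / 2 / (k + 2) : ℝ) : ℂ)
    have hu0 : ∀ k, u k ≠ 0 := fun k => by
      simp only [u, ne_eq, Complex.ofReal_eq_zero]; positivity
    have hun : ∀ k, ‖u k‖ < r := fun k => by
      simp only [u, Complex.norm_real, Real.norm_eq_abs]
      rw [abs_of_pos (by positivity), div_lt_iff₀ (by positivity)]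
      nlinarith [Nat.cast_nonneg (α := ℝ) k]
    have hut : Filter.Tendsto u Filter.atTop (nhds 0) := by
      have : Filter.Tendsto (fun k : ℕ => r / 2 / ((k : ℝ) + 2)) Filter.atTop (nhds 0) :=
        Filter.Tendsto.div_atTop tendsto_const_nhds
          (Filter.tendsto_atTop_add_const_right _ _ tendsto_natCast_atTop_atTop)
      rw [← Complex.ofReal_zero]
      exact (Complex.continuous_ofReal.tendsto 0).comp this
    refine aestronglyMeasurable_of_tendsto_ae Filter.atTop
      (f := fun k x => (u k)⁻¹ • (f (z₀ + u k) x - f z₀ x)) (fun k => ?_) ?_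
    · have hk : z₀ + u k ∈ U := hrU (by simpa using hun k)
      exact ((hm _ hk).sub (hm _ hz₀)).const_smul (u k)⁻¹
    · refine Filter.Eventually.of_forall fun x => ?_
      have := (hder x z₀ (Metric.mem_ball_self (by positivity))).tendsto_slope_zero
      refine this.comp ?_
      exact tendsto_nhdsWithin_iff.2 ⟨hut, Filter.Eventually.of_forall hu0⟩
  have hint : Integrable (f z₀) μ :=
    hg.mono' (hm z₀ hz₀) (Filter.Eventually.of_forall fun x => hfg z₀ hz₀ x)
  have := (hasDerivAt_integral_of_dominated_loc_of_deriv_le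
    (Metric.ball_mem_nhds z₀ (by positivity : 0 < r / 2))
    (by filter_upwards [hU.mem_nhds hz₀] with z hz using hm z hz) hint hmd
    (Filter.Eventually.of_forall hbound) (hg.div_const _) (Filter.Eventually.of_forall hder)).2
  exact this.differentiableAt.differentiableWithinAt

/-- A Lipschitz strongly monotone map on a Hilbert space is onto. -/
theorem surjective_of_strongly_monotone {H : Type*} [NormedAddCommGroup H] [InnerProductSpace ℝ H]
    [CompleteSpace H] {G : H → H} {c L : ℝ} (hc : 0 < c)
    (hL : ∀ x y, ‖G x - G y‖ ≤ L * ‖x - y‖)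
    (hG : ∀ x y, c * ‖x - y‖ ^ 2 ≤ ⟪G x - G y, x - y⟫) : Function.Surjective G := by
  intro q
  set L' := |L| + c with hL'
  have hL'pos : 0 < L' := by positivity
  have hcL : c ≤ L' := by rw [hL']; linarith [abs_nonneg L]
  set τ := c / L' ^ 2 with hτ
  set k := 1 - c ^ 2 / L' ^ 2 with hk
  have hk0 : 0 ≤ k := by
    rw [hk, sub_nonneg, div_le_one (by positivity)]
    gcongr
  have hk1 : k < 1 := by rw [hk]; linarith [show 0 < c ^ 2 / L' ^ 2 by positivity]
  have hcontr : ContractingWith (Real.toNNReal (√k)) (fun x => x - τ • (G x - q)) := by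
    refine ⟨?_, LipschitzWith.of_dist_le_mul fun x y => ?_⟩
    · rw [Real.toNNReal_lt_one, Real.sqrt_lt' one_pos]; simpa using hk1
    · rw [Real.coe_toNNReal _ (Real.sqrt_nonneg _), dist_eq_norm, dist_eq_norm]
      refine abs_le_of_sq_le_sq' ?_ (by positivity) |>.2
      rw [mul_pow, Real.sq_sqrt hk0]
      have e : x - τ • (G x - q) - (y - τ • (G y - q)) = (x - y) - τ • (G x - G y) := by
        module
      rw [e, norm_sub_sq_real, inner_smul_right, norm_smul, mul_pow, real_inner_comm]
      have h1 := hG x y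
      have h2 : ‖G x - G y‖ ^ 2 ≤ L' ^ 2 * ‖x - y‖ ^ 2 := by
        rw [← mul_pow]
        refine pow_le_pow_left₀ (norm_nonneg _) ((hL x y).trans ?_) 2
        gcongr
        rw [hL']; linarith [le_abs_self L]
      have hτ0 : 0 < τ := by positivity
      have h3 : ‖τ‖ ^ 2 * ‖G x - G y‖ ^ 2 ≤ τ ^ 2 * (L' ^ 2 * ‖x - y‖ ^ 2) := by
        rw [Real.norm_eq_abs, sq_abs]; gcongr
      have h4 : τ * (c * ‖x - y‖ ^ 2) ≤ τ * ⟪G x - G y, x - y⟫ := by gcongr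
      have h5 : τ * c = c ^ 2 / L' ^ 2 := by rw [hτ]; ring
      have h6 : τ ^ 2 * L' ^ 2 = c ^ 2 / L' ^ 2 := by rw [hτ]; field_simp
      have h7 : k * ‖x - y‖ ^ 2 = ‖x - y‖ ^ 2 - 2 * (τ * (c * ‖x - y‖ ^ 2))
          + τ ^ 2 * (L' ^ 2 * ‖x - y‖ ^ 2) := by
        rw [← mul_assoc τ c, ← mul_assoc (τ ^ 2), h5, h6, hk]; ring
      rw [h7]
      linarith
  have hfix := hcontr.fixedPoint_isFixedPt
  refine ⟨ContractingWith.fixedPoint _ hcontr, ?_⟩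
  have h8 : τ • (G (ContractingWith.fixedPoint _ hcontr) - q) = 0 := by
    have := hfix.eq
    simpa using this
  have hτ0 : τ ≠ 0 := by positivity
  exact sub_eq_zero.1 ((smul_eq_zero.1 h8).resolve_left hτ0)

/-- A linear map joined to the identity by a segment of injective maps has positive determinant. -/
theorem det_pos_of_segment {V : Type*} [NormedAddCommGroup V] [NormedSpace ℝ V]
    [FiniteDimensional ℝ V] (L : V →L[ℝ] V)
    (h : ∀ t ∈ Set.Icc (0 : ℝ) 1, ∀ v, v ≠ 0 → t • v + (1 - t) • L v ≠ 0) : 0 < L.det := by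
  let p : ℝ → ℝ := fun t => (t • ContinuousLinearMap.id ℝ V + (1 - t) • L).det
  have hp : Continuous p := ContinuousLinearMap.continuous_det.comp (by fun_prop)
  have hne : ∀ t ∈ Set.Icc (0 : ℝ) 1, p t ≠ 0 := by
    intro t ht h0
    have := LinearMap.bot_lt_ker_of_det_eq_zero (f := ((t • ContinuousLinearMap.id ℝ V
      + (1 - t) • L : V →L[ℝ] V) : V →ₗ[ℝ] V)) h0
    obtain ⟨v, hv, hv0⟩ := Submodule.exists_mem_ne_zero_of_ne_bot this.ne'
    exact h t ht v hv0 (by simpa using hv)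
  have h1 : p 1 = 1 := by simp [p, ContinuousLinearMap.det]
  have h0 : p 0 = L.det := by simp [p]
  rw [← h0]
  by_contra hcon
  obtain ⟨t, ht, ht0⟩ := intermediate_value_Icc zero_le_one hp.continuousOn
    (show (0 : ℝ) ∈ Set.Icc (p 0) (p 1) from ⟨not_lt.1 hcon, by simp [h1]⟩)
  exact hne t ht ht0

/-- The matrix of a linear map in the standard basis. -/
def matE {n : ℕ} (A : Euc n →L[ℝ] Euc n) : Matrix (Fin n) (Fin n) ℝ :=
  LinearMap.toMatrix (EuclideanSpace.basisFun (Fin n) ℝ).toBasis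
    (EuclideanSpace.basisFun (Fin n) ℝ).toBasis (A : Euc n →ₗ[ℝ] Euc n)

/-- The linear map of `Euc n × Euc n` with the given blocks. -/
def blockCLM {n : ℕ} (A B C D : Euc n →L[ℝ] Euc n) : Euc n × Euc n →L[ℝ] Euc n × Euc n :=
  (A.comp (ContinuousLinearMap.fst ℝ _ _) + B.comp (ContinuousLinearMap.snd ℝ _ _)).prod
    (C.comp (ContinuousLinearMap.fst ℝ _ _) + D.comp (ContinuousLinearMap.snd ℝ _ _))

theorem det_blockCLM {n : ℕ} (A B C D : Euc n →L[ℝ] Euc n) :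
    (blockCLM A B C D).det = (Matrix.fromBlocks (matE A) (matE B) (matE C) (matE D)).det := by
  let b := (EuclideanSpace.basisFun (Fin n) ℝ).toBasis
  rw [ContinuousLinearMap.det, ← LinearMap.det_toMatrix (b.prod b)]
  congr 1
  ext i j
  rcases i with i | i <;> rcases j with j | j <;>
    simp [LinearMap.toMatrix_apply, blockCLM, matE, b]

theorem matE_entry_le {n : ℕ} (A : Euc n →L[ℝ] Euc n) (i j : Fin n) : |matE A i j| ≤ ‖A‖ := by
  have : matE A i j = (A (EuclideanSpace.single j 1)) i := by
    simp [matE, LinearMap.toMatrix_apply]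
  rw [this]
  have h1 := PiLp.norm_apply_le (A (EuclideanSpace.single j 1)) i
  have h2 := A.le_opNorm (EuclideanSpace.single j (1 : ℝ))
  simp only [PiLp.norm_single, norm_one, mul_one] at h2
  exact h1.trans h2

theorem matE_add {n : ℕ} (A B : Euc n →L[ℝ] Euc n) : matE (A + B) = matE A + matE B := by
  simp [matE]

theorem matE_sub {n : ℕ} (A B : Euc n →L[ℝ] Euc n) : matE (A - B) = matE A - matE B := by
  simp [matE]

theorem matE_smul {n : ℕ} (c : ℝ) (A : Euc n →L[ℝ] Euc n) : matE (c • A) = c • matE A := by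
  simp [matE]

theorem matE_one {n : ℕ} : matE (ContinuousLinearMap.id ℝ (Euc n)) = 1 := by
  simp only [matE, ContinuousLinearMap.coe_id]
  exact LinearMap.toMatrix_id _

theorem continuous_matE {n : ℕ} : Continuous (matE : (Euc n →L[ℝ] Euc n) → _) := by
  let l : (Euc n →L[ℝ] Euc n) →ₗ[ℝ] Matrix (Fin n) (Fin n) ℝ :=
    { toFun := matE, map_add' := matE_add, map_smul' := matE_smul }
  exact l.continuous_of_finiteDimensional

/-- The Gaussian integral over `ℝⁿ × ℝⁿ`. -/
theorem gaussian_prod {n : ℕ} :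
    ∫ p : Euc n × Euc n, Real.exp (-(1 / 2) * (‖p.1‖ ^ 2 + ‖p.2‖ ^ 2)) = (2 * Real.pi) ^ n := by
  have h := GaussianFourier.integral_rexp_neg_mul_sq_norm (V := Euc n)
    (show (0 : ℝ) < 1 / 2 by norm_num)
  have : ∀ p : Euc n × Euc n, Real.exp (-(1 / 2) * (‖p.1‖ ^ 2 + ‖p.2‖ ^ 2))
      = Real.exp (-(1 / 2) * ‖p.1‖ ^ 2) * Real.exp (-(1 / 2) * ‖p.2‖ ^ 2) := by
    intro p; rw [← Real.exp_add]; ring_nf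
  simp_rw [this]
  rw [Measure.volume_eq_prod, integral_prod_mul (fun x : Euc n => Real.exp (-(1 / 2) * ‖x‖ ^ 2))
    (fun x : Euc n => Real.exp (-(1 / 2) * ‖x‖ ^ 2)), h, ← Real.rpow_add (by positivity)]
  simp only [finrank_euclideanSpace, Fintype.card_fin, add_halves, Real.rpow_natCast]
  congr 1
  ring

theorem gaussian_integrable {n : ℕ} {c : ℝ} (hc : 0 < c) :
    Integrable fun p : Euc n × Euc n => Real.exp (-c * (‖p.1‖ ^ 2 + ‖p.2‖ ^ 2)) := by
  have h : Integrable fun x : Euc n => Real.exp (-c * ‖x‖ ^ 2) := by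
    have := (GaussianFourier.integrable_cexp_neg_mul_sq_norm_add (V := Euc n) (b := (c : ℂ))
      (by simpa using hc) 0 0).norm
    refine this.congr (Filter.Eventually.of_forall fun x => ?_)
    simp only [zero_mul, add_zero, Complex.norm_exp]
    norm_cast
  have := h.mul_prod h
  rw [← Measure.volume_eq_prod] at this
  refine this.congr (Filter.Eventually.of_forall fun p => ?_)
  simp only [← Real.exp_add]
  ring_nf

/-! ### A Gaussian change of variables for monotone fields -/

/-- A continuously differentiable map `F` with derivative `F'` that fixes the origin, is Lipschitz
with constant `Λ` and strongly monotone with constant `δ`; the model case is the gradient of a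
strongly convex function with bounded Hessian. -/
structure RegMono {n : ℕ} (F : Euc n → Euc n) (F' : Euc n → Euc n →L[ℝ] Euc n) (δ Λ : ℝ) :
    Prop where
  deriv : ∀ a, HasFDerivAt F (F' a) a
  cont : Continuous F'
  lip : ∀ a b, ‖F a - F b‖ ≤ Λ * ‖a - b‖
  mono : ∀ a b, δ * ‖a - b‖ ^ 2 ≤ ⟪F a - F b, a - b⟫
  zero : F 0 = 0
  pos : 0 < δ
  nonneg : 0 ≤ Λ

section
variable {n : ℕ} {F : Euc n → Euc n} {F' : Euc n → Euc n →L[ℝ] Euc n} {δ Λ : ℝ}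

theorem RegMono.norm_deriv (h : RegMono F F' δ Λ) (a : Euc n) : ‖F' a‖ ≤ Λ := by
  refine (h.deriv a).le_of_lip' h.nonneg (Filter.Eventually.of_forall fun x => h.lip x a)

theorem RegMono.deriv_mono (h : RegMono F F' δ Λ) (a v : Euc n) : 0 ≤ ⟪F' a v, v⟫ := by
  have h1 := (h.deriv a).hasLineDerivAt v
  have h2 := h1.tendsto_slope_zero
  have h3 : Filter.Tendsto (fun t : ℝ => ⟪t⁻¹ • (F (a + t • v) - F a), v⟫)
      (nhdsWithin 0 {0}ᶜ) (nhds ⟪F' a v, v⟫) := Filter.Tendsto.inner h2 tendsto_const_nhds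
  refine ge_of_tendsto h3 ?_
  filter_upwards [self_mem_nhdsWithin] with t ht
  have ht0 : t ≠ 0 := ht
  have h4 := h.mono (a + t • v) a
  have h5 : (0 : ℝ) ≤ ⟪F (a + t • v) - F a, t • v⟫ := by
    rw [add_sub_cancel_left] at h4
    exact le_trans (mul_nonneg h.pos.le (sq_nonneg _)) h4
  rw [real_inner_smul_right] at h5
  rw [real_inner_smul_left, show t⁻¹ = (t⁻¹) ^ 2 * t by field_simp, mul_assoc]
  positivity

theorem RegMono.continuous (h : RegMono F F' δ Λ) : Continuous F :=
  continuous_iff_continuousAt.2 fun a => (h.deriv a).continuousAt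

/-- A family of maps on `Euc n × Euc n`, to be continued from real to imaginary `ε`. -/
def psi (F : Euc n → Euc n) (ε : ℝ) (p : Euc n × Euc n) : Euc n × Euc n :=
  ((1 / 2 : ℝ) • (p.1 + F p.1) + (ε / 2) • (p.2 - F p.2),
    (1 / 2 : ℝ) • (p.2 + F p.2) - (ε / 2) • (p.1 - F p.1))

/-- The derivative of `psi` when the derivatives of `F` at the two points are `A` and `B`. -/
def psi' (A B : Euc n →L[ℝ] Euc n) (ε : ℝ) : Euc n × Euc n →L[ℝ] Euc n × Euc n :=
  blockCLM ((1 / 2 : ℝ) • (ContinuousLinearMap.id ℝ _ + A))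
    ((ε / 2) • (ContinuousLinearMap.id ℝ _ - B))
    (-((ε / 2) • (ContinuousLinearMap.id ℝ _ - A)))
    ((1 / 2 : ℝ) • (ContinuousLinearMap.id ℝ _ + B))

theorem psi'_apply (A B : Euc n →L[ℝ] Euc n) (ε : ℝ) (p : Euc n × Euc n) :
    psi' A B ε p = ((1 / 2 : ℝ) • (p.1 + A p.1) + (ε / 2) • (p.2 - B p.2),
      (1 / 2 : ℝ) • (p.2 + B p.2) - (ε / 2) • (p.1 - A p.1)) := by
  simp only [psi', blockCLM, ContinuousLinearMap.prod_apply, add_apply,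
    ContinuousLinearMap.comp_apply, smul_apply, neg_apply,
    sub_apply, ContinuousLinearMap.id_apply, ContinuousLinearMap.coe_fst',
    ContinuousLinearMap.coe_snd']
  ext i <;> simp; ring

theorem psi_hasFDerivAt (hF : ∀ a, HasFDerivAt F (F' a) a) (ε : ℝ) (p : Euc n × Euc n) :
    HasFDerivAt (psi F ε) (psi' (F' p.1) (F' p.2) ε) p := by
  have h1 : HasFDerivAt (fun p : Euc n × Euc n => p.1) (ContinuousLinearMap.fst ℝ _ _) p :=
    hasFDerivAt_fst
  have h2 : HasFDerivAt (fun p : Euc n × Euc n => p.2) (ContinuousLinearMap.snd ℝ _ _) p :=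
    hasFDerivAt_snd
  have h3 := (hF p.1).comp p h1
  have h4 := (hF p.2).comp p h2
  have h5 := ((h1.add h3).const_smul (1 / 2 : ℝ)).add ((h2.sub h4).const_smul (ε / 2))
  have h6 := ((h2.add h4).const_smul (1 / 2 : ℝ)).sub ((h1.sub h3).const_smul (ε / 2))
  have h7 := h5.prodMk h6
  refine h7.congr_fderiv ?_
  refine ContinuousLinearMap.ext fun q => ?_
  rw [psi'_apply]
  simp

/-- Strong monotonicity of `psi F ε` for small `ε`, stated for increments `x₁, x₂` of the points and
`y₁, y₂` of the values; the linearized case gives the positivity of the Jacobian. -/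
theorem mono_core {x₁ x₂ y₁ y₂ : Euc n} {ε : ℝ} (_ : 0 ≤ Λ) (h1 : 0 ≤ ⟪y₁, x₁⟫)
    (h2 : 0 ≤ ⟪y₂, x₂⟫) (l1 : ‖y₁‖ ≤ Λ * ‖x₁‖) (l2 : ‖y₂‖ ≤ Λ * ‖x₂‖) (hε : |ε| * Λ ≤ 1 / 2) :
    (1 / 4) * (‖x₁‖ ^ 2 + ‖x₂‖ ^ 2) ≤ ⟪(1 / 2 : ℝ) • (x₁ + y₁) + (ε / 2) • (x₂ - y₂), x₁⟫
      + ⟪(1 / 2 : ℝ) • (x₂ + y₂) - (ε / 2) • (x₁ - y₁), x₂⟫ := by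
  simp only [inner_add_left, inner_sub_left, real_inner_smul_left, real_inner_self_eq_norm_sq]
  have h3 : |ε * ⟪y₁, x₂⟫| ≤ 1 / 2 * (‖x₁‖ * ‖x₂‖) := by
    rw [abs_mul]
    calc |ε| * |⟪y₁, x₂⟫| ≤ |ε| * (Λ * ‖x₁‖ * ‖x₂‖) := by
          gcongr; exact (abs_real_inner_le_norm _ _).trans (by gcongr)
      _ = (|ε| * Λ) * (‖x₁‖ * ‖x₂‖) := by ring
      _ ≤ _ := by gcongr
  have h4 : |ε * ⟪y₂, x₁⟫| ≤ 1 / 2 * (‖x₁‖ * ‖x₂‖) := by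
    rw [abs_mul]
    calc |ε| * |⟪y₂, x₁⟫| ≤ |ε| * (Λ * ‖x₂‖ * ‖x₁‖) := by
          gcongr; exact (abs_real_inner_le_norm _ _).trans (by gcongr)
      _ = (|ε| * Λ) * (‖x₁‖ * ‖x₂‖) := by ring
      _ ≤ _ := by gcongr
  rw [real_inner_comm x₁ x₂]
  have h3' := (abs_le.1 h3).1
  have h4' := (abs_le.1 h4).2
  nlinarith [sq_nonneg (‖x₁‖ - ‖x₂‖)]

theorem psi'_det_pos (h : RegMono F F' δ Λ) {ε : ℝ} (hε : |ε| * Λ ≤ 1 / 2) (a b : Euc n) :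
    0 < (psi' (F' a) (F' b) ε).det := by
  refine det_pos_of_segment _ fun t ht v hv h0 => hv ?_
  have l : ∀ a v, ‖F' a v‖ ≤ Λ * ‖v‖ := fun a v =>
    ((F' a).le_opNorm v).trans (by gcongr; exact h.norm_deriv a)
  have key := mono_core h.nonneg (h.deriv_mono a v.1) (h.deriv_mono b v.2) (l a v.1) (l b v.2) hε
  rw [psi'_apply] at h0
  have e1 := congrArg (fun w : Euc n × Euc n => ⟪w.1, v.1⟫ + ⟪w.2, v.2⟫) h0
  simp only [Prod.fst_add, Prod.snd_add, Prod.smul_fst, Prod.smul_snd, Prod.fst_zero,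
    Prod.snd_zero, inner_zero_left] at e1
  rw [inner_add_left, inner_add_left, real_inner_smul_left, real_inner_smul_left,
    real_inner_smul_left, real_inner_smul_left, real_inner_self_eq_norm_sq,
    real_inner_self_eq_norm_sq] at e1
  have e2 : t * (‖v.1‖ ^ 2 + ‖v.2‖ ^ 2) + (1 - t) * ((1 / 4) * (‖v.1‖ ^ 2 + ‖v.2‖ ^ 2)) ≤ 0 := by
    have := mul_le_mul_of_nonneg_left key (sub_nonneg.2 ht.2)
    nlinarith
  have e3 : ‖v.1‖ ^ 2 + ‖v.2‖ ^ 2 ≤ 0 := by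
    have : 0 ≤ ‖v.1‖ ^ 2 + ‖v.2‖ ^ 2 := by positivity
    nlinarith [mul_nonneg ht.1 this]
  have e4 : ‖v.1‖ = 0 := by nlinarith [sq_nonneg ‖v.1‖, sq_nonneg ‖v.2‖]
  have e5 : ‖v.2‖ = 0 := by nlinarith [sq_nonneg ‖v.1‖, sq_nonneg ‖v.2‖]
  exact Prod.ext (norm_eq_zero.1 e4) (norm_eq_zero.1 e5)

theorem RegMono.mono0 (h : RegMono F F' δ Λ) (a b : Euc n) : 0 ≤ ⟪F a - F b, a - b⟫ :=
  (mul_nonneg h.pos.le (sq_nonneg _)).trans (h.mono a b)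

theorem psi_sub (ε : ℝ) (p q : Euc n × Euc n) : psi F ε p - psi F ε q =
    ((1 / 2 : ℝ) • ((p.1 - q.1) + (F p.1 - F q.1)) + (ε / 2) • ((p.2 - q.2) - (F p.2 - F q.2)),
    (1 / 2 : ℝ) • ((p.2 - q.2) + (F p.2 - F q.2)) - (ε / 2) • ((p.1 - q.1) - (F p.1 - F q.1))) := by
  refine Prod.ext ?_ ?_ <;> simp only [psi, Prod.fst_sub, Prod.snd_sub] <;> module

theorem psi_bijective (h : RegMono F F' δ Λ) {ε : ℝ} (hε : |ε| * Λ ≤ 1 / 2) :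
    Function.Bijective (psi F ε) := by
  have key : ∀ p q : Euc n × Euc n, (1 / 4) * (‖p.1 - q.1‖ ^ 2 + ‖p.2 - q.2‖ ^ 2) ≤
      ⟪(psi F ε p - psi F ε q).1, p.1 - q.1⟫ + ⟪(psi F ε p - psi F ε q).2, p.2 - q.2⟫ := by
    intro p q
    rw [psi_sub]
    exact mono_core h.nonneg (h.mono0 _ _) (h.mono0 _ _) (h.lip _ _) (h.lip _ _) hε
  constructor
  · intro p q hpq
    have := key p q
    simp only [hpq, sub_self, Prod.fst_zero, Prod.snd_zero, inner_zero_left, add_zero] at this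
    have e4 : ‖p.1 - q.1‖ = 0 := by nlinarith [sq_nonneg ‖p.1 - q.1‖, sq_nonneg ‖p.2 - q.2‖]
    have e5 : ‖p.2 - q.2‖ = 0 := by nlinarith [sq_nonneg ‖p.1 - q.1‖, sq_nonneg ‖p.2 - q.2‖]
    exact Prod.ext (sub_eq_zero.1 (norm_eq_zero.1 e4)) (sub_eq_zero.1 (norm_eq_zero.1 e5))
  · have hs : Function.Surjective
        (fun p : WithLp 2 (Euc n × Euc n) => WithLp.toLp 2 (psi F ε p.ofLp)) := by
      refine surjective_of_strongly_monotone (c := 1 / 4) (L := (1 + Λ) * (1 + |ε|)) (by norm_num)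
        (fun p q => ?_) fun p q => ?_
      · have hp1 : ‖p.ofLp.1 - q.ofLp.1‖ ≤ ‖p - q‖ := by
          have := WithLp.prod_norm_sq_eq_of_L2 (p - q)
          refine abs_le_of_sq_le_sq' ?_ (norm_nonneg _) |>.2
          rw [this]
          exact le_add_of_nonneg_right (sq_nonneg _)
        have hp2 : ‖p.ofLp.2 - q.ofLp.2‖ ≤ ‖p - q‖ := by
          have := WithLp.prod_norm_sq_eq_of_L2 (p - q)
          refine abs_le_of_sq_le_sq' ?_ (norm_nonneg _) |>.2
          rw [this]
          exact le_add_of_nonneg_left (sq_nonneg _)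
        have hle : ∀ w : WithLp 2 (Euc n × Euc n), ‖w‖ ≤ ‖w.ofLp.1‖ + ‖w.ofLp.2‖ := by
          intro w
          have := WithLp.prod_norm_sq_eq_of_L2 w
          refine abs_le_of_sq_le_sq' ?_ (by positivity) |>.2
          rw [this]
          change ‖w.ofLp.1‖ ^ 2 + ‖w.ofLp.2‖ ^ 2 ≤ _
          nlinarith [norm_nonneg w.ofLp.1, norm_nonneg w.ofLp.2]
        have hl1 := h.lip p.ofLp.1 q.ofLp.1
        have hl2 := h.lip p.ofLp.2 q.ofLp.2
        have hΛ := h.nonneg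
        have b1 : Λ * ‖p.ofLp.1 - q.ofLp.1‖ ≤ Λ * ‖p - q‖ := by gcongr
        have b2 : Λ * ‖p.ofLp.2 - q.ofLp.2‖ ≤ Λ * ‖p - q‖ := by gcongr
        refine (hle _).trans ?_
        rw [← WithLp.toLp_sub, psi_sub]
        have t1 : ∀ (s : ℝ) (u v : Euc n), ‖s • (u + v)‖ ≤ |s| * (‖u‖ + ‖v‖) := fun s u v => by
          rw [norm_smul, Real.norm_eq_abs]; gcongr; exact norm_add_le _ _
        have t2 : ∀ (s : ℝ) (u v : Euc n), ‖s • (u - v)‖ ≤ |s| * (‖u‖ + ‖v‖) := fun s u v => by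
          rw [norm_smul, Real.norm_eq_abs]; gcongr; exact norm_sub_le _ _
        have u1 := (norm_add_le _ _).trans (add_le_add
          (t1 (1 / 2) (p.ofLp.1 - q.ofLp.1) (F p.ofLp.1 - F q.ofLp.1))
          (t2 (ε / 2) (p.ofLp.2 - q.ofLp.2) (F p.ofLp.2 - F q.ofLp.2)))
        have u2 := (norm_sub_le _ _).trans (add_le_add
          (t1 (1 / 2) (p.ofLp.2 - q.ofLp.2) (F p.ofLp.2 - F q.ofLp.2))
          (t2 (ε / 2) (p.ofLp.1 - q.ofLp.1) (F p.ofLp.1 - F q.ofLp.1)))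
        have a1 : |(1 / 2 : ℝ)| = 1 / 2 := abs_of_pos (by norm_num)
        have a2 : |ε / 2| = |ε| / 2 := by rw [abs_div, abs_two]
        rw [a1, a2] at u1 u2
        have c1 : |ε| / 2 * (‖p.ofLp.2 - q.ofLp.2‖ + ‖F p.ofLp.2 - F q.ofLp.2‖) ≤
          |ε| / 2 * (‖p - q‖ + Λ * ‖p - q‖) := by gcongr; linarith
        have c2 : |ε| / 2 * (‖p.ofLp.1 - q.ofLp.1‖ + ‖F p.ofLp.1 - F q.ofLp.1‖) ≤
          |ε| / 2 * (‖p - q‖ + Λ * ‖p - q‖) := by gcongr; linarith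
        refine (add_le_add u1 u2).trans ?_
        linarith
      · have := key p.ofLp q.ofLp
        rw [WithLp.prod_norm_sq_eq_of_L2, WithLp.prod_inner_apply]
        exact this
    intro q
    obtain ⟨p, hp⟩ := hs (WithLp.toLp 2 q)
    exact ⟨p.ofLp, congrArg WithLp.ofLp hp⟩

/-- For small real `ε` the map `psi F ε` is a diffeomorphism with positive Jacobian, so the pulled
back Gaussian has the integral of the standard one. -/
theorem psi_integral (h : RegMono F F' δ Λ) {ε : ℝ} (hε : |ε| * Λ ≤ 1 / 2) :
    ∫ p : Euc n × Euc n, (psi' (F' p.1) (F' p.2) ε).det *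
      Real.exp (-(1 / 2) * (‖(psi F ε p).1‖ ^ 2 + ‖(psi F ε p).2‖ ^ 2)) = (2 * Real.pi) ^ n := by
  have : (volume : Measure (Euc n × Euc n)).IsAddHaarMeasure := by
    rw [Measure.volume_eq_prod]; infer_instance
  have := integral_image_eq_integral_abs_det_fderiv_smul volume MeasurableSet.univ
    (fun p _ => (psi_hasFDerivAt h.deriv ε p).hasFDerivWithinAt)
    (psi_bijective h hε).1.injOn
    (fun p : Euc n × Euc n => Real.exp (-(1 / 2) * (‖p.1‖ ^ 2 + ‖p.2‖ ^ 2)))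
  rw [Set.image_univ, (psi_bijective h hε).2.range_eq, setIntegral_univ, setIntegral_univ,
    gaussian_prod] at this
  rw [this]
  refine integral_congr_ae (Filter.Eventually.of_forall fun p => ?_)
  simp only [smul_eq_mul]
  rw [abs_of_pos (psi'_det_pos h hε _ _)]

end

/-! ### Analytic continuation of the Jacobian and of the phase -/

section
variable {n : ℕ} {F : Euc n → Euc n} {F' : Euc n → Euc n →L[ℝ] Euc n} {δ Λ : ℝ}

/-- The sum of the squared norms of the two points and of the values of `F` there. -/
def qN (F : Euc n → Euc n) (p : Euc n × Euc n) : ℝ :=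
  ‖p.1‖ ^ 2 + ‖F p.1‖ ^ 2 + ‖p.2‖ ^ 2 + ‖F p.2‖ ^ 2

/-- The pairing `⟪F a, a⟫ + ⟪F b, b⟫` of points with values. -/
def qM (F : Euc n → Euc n) (p : Euc n × Euc n) : ℝ := ⟪F p.1, p.1⟫ + ⟪F p.2, p.2⟫

/-- The antisymmetric cross pairing `⟪F a, b⟫ - ⟪F b, a⟫`. -/
def qW (F : Euc n → Euc n) (p : Euc n × Euc n) : ℝ := ⟪F p.1, p.2⟫ - ⟪F p.2, p.1⟫

/-- The analytic continuation in `ε` of the squared norm of `psi F ε p`. -/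
def phase (F : Euc n → Euc n) (z : ℂ) (p : Euc n × Euc n) : ℂ :=
  (1 / 4) * ((1 + z ^ 2) * (qN F p : ℂ) + 2 * (1 - z ^ 2) * (qM F p : ℂ) + 4 * z * (qW F p : ℂ))

/-- The complex matrix with the entries of `matE A`. -/
def matC (A : Euc n →L[ℝ] Euc n) : Matrix (Fin n) (Fin n) ℂ := (matE A).map Complex.ofReal

/-- The block matrix whose determinant continues the Jacobian of `psi F ε` analytically in `ε`. -/
def jacMat (A B : Euc n →L[ℝ] Euc n) (z : ℂ) : Matrix (Fin n ⊕ Fin n) (Fin n ⊕ Fin n) ℂ :=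
  Matrix.fromBlocks ((1 / 2 : ℂ) • (1 + matC A)) ((z / 2) • (1 - matC B))
    (-((z / 2) • (1 - matC A))) ((1 / 2 : ℂ) • (1 + matC B))

theorem phase_real (F : Euc n → Euc n) (ε : ℝ) (p : Euc n × Euc n) :
    phase F ε p = ((‖(psi F ε p).1‖ ^ 2 + ‖(psi F ε p).2‖ ^ 2 : ℝ) : ℂ) := by
  have : ‖(psi F ε p).1‖ ^ 2 + ‖(psi F ε p).2‖ ^ 2
      = (1 / 4) * ((1 + ε ^ 2) * qN F p + 2 * (1 - ε ^ 2) * qM F p + 4 * ε * qW F p) := by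
    simp only [psi, qN, qM, qW, ← real_inner_self_eq_norm_sq, inner_add_left, inner_add_right,
      inner_sub_left, inner_sub_right, real_inner_smul_left, real_inner_smul_right]
    rw [real_inner_comm (F p.1) p.1, real_inner_comm (F p.2) p.2, real_inner_comm p.2 p.1,
      real_inner_comm (F p.1) p.2, real_inner_comm (F p.2) p.1, real_inner_comm (F p.2) (F p.1)]
    ring
  rw [this, phase]
  push_cast
  ring

theorem jacMat_real (A B : Euc n →L[ℝ] Euc n) (ε : ℝ) :
    (jacMat A B ε).det = (((psi' A B ε).det : ℝ) : ℂ) := by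
  rw [psi', det_blockCLM]
  change _ = Complex.ofRealHom _
  rw [RingHom.map_det]
  congr 1
  rw [RingHom.mapMatrix_apply, Matrix.fromBlocks_map, jacMat]
  have hs : ∀ (r : ℝ) (M : Euc n →L[ℝ] Euc n),
      (matE (r • M)).map Complex.ofRealHom = (r : ℂ) • matC M := by
    intro r M; ext i j; simp [matE_smul, matC]
  have ha : matC (ContinuousLinearMap.id ℝ _ + A) = 1 + matC A := by
    ext i j; simp [matC, matE_add, matE_one, Matrix.one_apply, apply_ite]
  have hb : matC (ContinuousLinearMap.id ℝ _ + B) = 1 + matC B := by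
    ext i j; simp [matC, matE_add, matE_one, Matrix.one_apply, apply_ite]
  have hc : matC (ContinuousLinearMap.id ℝ _ - A) = 1 - matC A := by
    ext i j; simp [matC, matE_sub, matE_one, Matrix.one_apply, apply_ite]
  have hd : matC (ContinuousLinearMap.id ℝ _ - B) = 1 - matC B := by
    ext i j; simp [matC, matE_sub, matE_one, Matrix.one_apply, apply_ite]
  have hn : ∀ (r : ℝ) (M : Euc n →L[ℝ] Euc n),
      (matE (-(r • M))).map Complex.ofRealHom = -((r : ℂ) • matC M) := by
    intro r M
    rw [show -(r • M) = (-r) • M from (neg_smul r M).symm, hs, Complex.ofReal_neg, neg_smul]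
  rw [hs, hs, hs, hn, ha, hb, hc, hd]
  push_cast
  rfl

/-- At `ε = I` the Jacobian factors through the sum of the two derivatives. -/
theorem jacMat_I (A B : Euc n →L[ℝ] Euc n) :
    (jacMat A B Complex.I).det = (1 / 2 : ℂ) ^ n * (((matE (A + B)).det : ℝ) : ℂ) := by
  have hI := Complex.I_mul_I
  -- two block row operations bring the matrix to the form with upper blocks `1` and `I`
  have h1 : Matrix.fromBlocks ((2 : ℂ) • 1) (Complex.I • 1) 0 (1 : Matrix (Fin n) (Fin n) ℂ) *
      (Matrix.fromBlocks 1 0 (Complex.I • 1) (1 : Matrix (Fin n) (Fin n) ℂ) *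
      jacMat A B Complex.I) = Matrix.fromBlocks 1 (Complex.I • 1)
        (Complex.I • matC A) (matC B) := by
    rw [jacMat, Matrix.fromBlocks_multiply, Matrix.fromBlocks_multiply]
    congr 1
    all_goals
      ext i j
      simp only [one_mul, zero_mul, add_zero, smul_mul_assoc, Matrix.add_apply, Matrix.zero_apply,
        Matrix.smul_apply, Matrix.sub_apply, Matrix.neg_apply, smul_eq_mul]
      generalize (1 : Matrix (Fin n) (Fin n) ℂ) i j = x
      generalize matC A i j = y
      generalize matC B i j = w
    · linear_combination y * hI
    · linear_combination (Complex.I / 2 * (x - w)) * hI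
    · ring
    · linear_combination (1 / 2 * (x - w)) * hI
  have h2 := congrArg Matrix.det h1
  rw [Matrix.det_mul, Matrix.det_mul, Matrix.det_fromBlocks_zero₂₁, Matrix.det_fromBlocks_zero₁₂,
    Matrix.det_fromBlocks_one₁₁, Matrix.det_smul, Matrix.det_one] at h2
  have h3 : matC B - Complex.I • matC A * Complex.I • (1 : Matrix (Fin n) (Fin n) ℂ)
      = Complex.ofRealHom.mapMatrix (matE (A + B)) := by
    ext i j
    simp only [matC, matE_add, Matrix.mul_smul, mul_one, Matrix.sub_apply,
      Matrix.smul_apply, Matrix.map_apply, smul_eq_mul, RingHom.mapMatrix_apply, Matrix.add_apply,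
      Complex.ofRealHom_eq_coe, Complex.ofReal_add]
    linear_combination (-(matE A i j : ℂ)) * hI
  rw [h3, ← RingHom.map_det, Fintype.card_fin] at h2
  simp only [mul_one, one_mul, Complex.ofRealHom_eq_coe] at h2
  rw [← h2, ← mul_assoc, ← mul_pow]
  norm_num

theorem phase_I (F : Euc n → Euc n) (p : Euc n × Euc n) :
    (phase F Complex.I p).re = qM F p := by
  simp [phase]
  ring

theorem jacMat_differentiable (A B : Euc n →L[ℝ] Euc n) :
    Differentiable ℂ fun z => (jacMat A B z).det := by
  have hent : ∀ i j, Differentiable ℂ fun z => jacMat A B z i j := by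
    intro i j
    rcases i with i | i <;> rcases j with j | j <;>
      simp only [jacMat, Matrix.fromBlocks_apply₁₁, Matrix.fromBlocks_apply₁₂,
        Matrix.fromBlocks_apply₂₁, Matrix.fromBlocks_apply₂₂, Matrix.smul_apply, Matrix.neg_apply,
        smul_eq_mul] <;> fun_prop
  simp only [Matrix.det_apply]
  refine Differentiable.fun_sum fun σ _ => Differentiable.const_smul ?_ _
  exact Differentiable.fun_finsetProd fun i _ => hent _ _

theorem continuous_matC : Continuous (matC : (Euc n →L[ℝ] Euc n) → _) :=
  continuous_matE.matrix_map Complex.continuous_ofReal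

theorem matC_entry_le (A : Euc n →L[ℝ] Euc n) (i j : Fin n) : ‖matC A i j‖ ≤ ‖A‖ := by
  simpa [matC] using matE_entry_le A i j

theorem jacMat_bound {A B : Euc n →L[ℝ] Euc n} (hA : ‖A‖ ≤ Λ) (hB : ‖B‖ ≤ Λ) {z : ℂ}
    (hz : ‖z‖ ≤ 4) : ‖(jacMat A B z).det‖
      ≤ (Fintype.card (Fin n ⊕ Fin n)).factorial • (2 * (1 + Λ)) ^ Fintype.card (Fin n ⊕ Fin n) := by
  have h1 : ∀ i j, ‖(1 : Matrix (Fin n) (Fin n) ℂ) i j‖ ≤ 1 := by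
    intro i j
    rw [Matrix.one_apply]
    split_ifs <;> simp
  have hp : ∀ (C : Euc n →L[ℝ] Euc n), ‖C‖ ≤ Λ → ∀ i j, ‖(1 + matC C) i j‖ ≤ 1 + Λ := by
    intro C hC i j
    exact (norm_add_le _ _).trans (add_le_add (h1 i j) ((matC_entry_le C i j).trans hC))
  have hm : ∀ (C : Euc n →L[ℝ] Euc n), ‖C‖ ≤ Λ → ∀ i j, ‖(1 - matC C) i j‖ ≤ 1 + Λ := by
    intro C hC i j
    exact (norm_sub_le _ _).trans (add_le_add (h1 i j) ((matC_entry_le C i j).trans hC))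
  have hΛ : 0 ≤ Λ := (norm_nonneg _).trans hA
  have c1 : ‖(1 / 2 : ℂ)‖ ≤ 2 := by norm_num
  have c2 : ‖z / 2‖ ≤ 2 := by
    rw [norm_div, Complex.norm_ofNat]; linarith
  refine Matrix.det_le (abv := NormedField.toAbsoluteValue ℂ) fun i j => ?_
  change ‖jacMat A B z i j‖ ≤ _
  rcases i with i | i <;> rcases j with j | j <;>
    simp only [jacMat, Matrix.fromBlocks_apply₁₁, Matrix.fromBlocks_apply₁₂,
      Matrix.fromBlocks_apply₂₁, Matrix.fromBlocks_apply₂₂, Matrix.smul_apply, Matrix.neg_apply,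
      smul_eq_mul, norm_neg, norm_mul]
  · exact mul_le_mul c1 (hp A hA i j) (norm_nonneg _) (by norm_num)
  · exact mul_le_mul c2 (hm B hB i j) (norm_nonneg _) (by norm_num)
  · exact mul_le_mul c2 (hm A hA i j) (norm_nonneg _) (by norm_num)
  · exact mul_le_mul c1 (hp B hB i j) (norm_nonneg _) (by norm_num)

/-- The real part of the phase is positive definite on a neighbourhood of the segment from `0`
to `I`. -/
theorem phase_re_lower (h : RegMono F F' δ Λ) {s : ℝ} (hs0 : 0 < s) (hs1 : s ≤ 1)
    (hs : 5 * s * (1 + Λ ^ 2) ≤ δ) {z : ℂ} (hz1 : |z.re| ≤ s) (hz2 : -s ≤ z.im)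
    (hz3 : z.im ≤ 1 + s) (p : Euc n × Euc n) :
    s * (‖p.1‖ ^ 2 + ‖p.2‖ ^ 2) ≤ (phase F z p).re := by
  have hre : (phase F z p).re = (1 / 4) * ((1 + (z.re ^ 2 - z.im ^ 2)) * qN F p
      + 2 * (1 - (z.re ^ 2 - z.im ^ 2)) * qM F p + 4 * z.re * qW F p) := by
    simp [phase, sq]
  have hF : ∀ a, ‖F a‖ ≤ Λ * ‖a‖ := fun a => by simpa [h.zero] using h.lip a 0
  have hM : ∀ a, δ * ‖a‖ ^ 2 ≤ ⟪F a, a⟫ := fun a => by simpa [h.zero] using h.mono a 0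
  have hF2 : ∀ a, ‖F a‖ ^ 2 ≤ Λ ^ 2 * ‖a‖ ^ 2 := fun a => by
    rw [← mul_pow]; exact pow_le_pow_left₀ (norm_nonneg _) (hF a) 2
  have n1 : qN F p ≤ (1 + Λ ^ 2) * (‖p.1‖ ^ 2 + ‖p.2‖ ^ 2) := by
    rw [qN]; nlinarith [hF2 p.1, hF2 p.2]
  have n2 : ‖p.1‖ ^ 2 + ‖p.2‖ ^ 2 ≤ qN F p := by
    rw [qN]; nlinarith [sq_nonneg ‖F p.1‖, sq_nonneg ‖F p.2‖]
  have m1 : 5 * s * qN F p ≤ qM F p := by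
    have : δ * (‖p.1‖ ^ 2 + ‖p.2‖ ^ 2) ≤ qM F p := by
      rw [qM]; linarith [hM p.1, hM p.2]
    have h2 : 5 * s * (1 + Λ ^ 2) * (‖p.1‖ ^ 2 + ‖p.2‖ ^ 2) ≤ δ * (‖p.1‖ ^ 2 + ‖p.2‖ ^ 2) := by
      gcongr
    have h3 : 5 * s * qN F p ≤ 5 * s * ((1 + Λ ^ 2) * (‖p.1‖ ^ 2 + ‖p.2‖ ^ 2)) := by gcongr
    linarith
  have i1 := real_inner_le_norm (F p.1) p.1
  have i2 := real_inner_le_norm (F p.2) p.2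
  have m2 : 2 * qM F p ≤ qN F p := by
    rw [qM, qN]; nlinarith [sq_nonneg (‖F p.1‖ - ‖p.1‖), sq_nonneg (‖F p.2‖ - ‖p.2‖)]
  have i3 := abs_le.1 (abs_real_inner_le_norm (F p.1) p.2)
  have i4 := abs_le.1 (abs_real_inner_le_norm (F p.2) p.1)
  have w1 : 2 * |qW F p| ≤ qN F p := by
    have : |qW F p| ≤ ‖F p.1‖ * ‖p.2‖ + ‖F p.2‖ * ‖p.1‖ := by
      rw [qW, abs_le]; constructor <;> linarith [i3.1, i3.2, i4.1, i4.2]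
    rw [qN]
    nlinarith [sq_nonneg (‖F p.1‖ - ‖p.2‖), sq_nonneg (‖F p.2‖ - ‖p.1‖)]
  have w2 : -(s * qN F p) ≤ 2 * (z.re * qW F p) := by
    have : |z.re * qW F p| ≤ s * |qW F p| := by rw [abs_mul]; gcongr
    have h2 := (abs_le.1 this).1
    nlinarith
  have hq : 0 ≤ qN F p := le_trans (by positivity) n2
  have t1 : -(3 * s) ≤ 1 + (z.re ^ 2 - z.im ^ 2) := by
    nlinarith [sq_nonneg z.re]
  have t2 : -(3 * s) * qN F p ≤ (1 + (z.re ^ 2 - z.im ^ 2)) * (qN F p - 2 * qM F p) := by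
    have a1 : -(3 * s) * (qN F p - 2 * qM F p)
        ≤ (1 + (z.re ^ 2 - z.im ^ 2)) * (qN F p - 2 * qM F p) :=
      mul_le_mul_of_nonneg_right t1 (by linarith)
    have a2 : 0 ≤ qM F p := le_trans (by positivity) m1
    nlinarith
  rw [hre]
  have : s * (‖p.1‖ ^ 2 + ‖p.2‖ ^ 2) ≤ s * qN F p := by gcongr
  nlinarith

end

/-! ### The Gaussian integral at `ε = I` and the transport inequality -/

section
variable {n : ℕ} {F : Euc n → Euc n} {F' : Euc n → Euc n →L[ℝ] Euc n} {δ Λ : ℝ}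

theorem continuous_integrand (h : RegMono F F' δ Λ) (z : ℂ) :
    Continuous fun p : Euc n × Euc n =>
      (jacMat (F' p.1) (F' p.2) z).det * Complex.exp (-(1 / 2) * phase F z p) := by
  have hF := h.continuous
  have hF' := h.cont
  have c1 : Continuous fun p : Euc n × Euc n => matC (F' p.1) :=
    continuous_matC.comp (hF'.comp continuous_fst)
  have c2 : Continuous fun p : Euc n × Euc n => matC (F' p.2) :=
    continuous_matC.comp (hF'.comp continuous_snd)
  have hq : Continuous (phase F z) := by
    unfold phase qN qM qW
    fun_prop
  refine Continuous.mul ?_ (by fun_prop)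
  refine Continuous.matrix_det (Continuous.matrix_fromBlocks ?_ ?_ ?_ ?_)
  all_goals fun_prop

/-- The Gaussian identity `psi_integral` persists at `ε = I`: both sides are analytic in `ε` on a
neighbourhood of the segment from `0` to `I` and agree for small real `ε`. -/
theorem integral_continuation (h : RegMono F F' δ Λ) :
    ∫ p : Euc n × Euc n, (jacMat (F' p.1) (F' p.2) Complex.I).det *
      Complex.exp (-(1 / 2) * phase F Complex.I p) = (((2 * Real.pi) ^ n : ℝ) : ℂ) := by
  have hδ := h.pos
  have hΛ := h.nonneg
  -- `s` bounds the width of the strip `U` around the segment from `0` to `I`: it must keep the phase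
  -- positive definite there and keep `psi F ε` invertible for real `ε` in `U`.
  set s : ℝ := min 1 (min (δ / (5 * (1 + Λ ^ 2))) (1 / (2 * (1 + Λ)))) with hs
  have hs0 : 0 < s := by
    rw [hs]; refine lt_min one_pos (lt_min (by positivity) (by positivity))
  have hs1 : s ≤ 1 := min_le_left _ _
  have hs2 : 5 * s * (1 + Λ ^ 2) ≤ δ := by
    have : s ≤ δ / (5 * (1 + Λ ^ 2)) := (min_le_right _ _).trans (min_le_left _ _)
    rw [le_div_iff₀ (by positivity)] at this
    linarith
  have hs3 : s * Λ ≤ 1 / 2 := by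
    have : s ≤ 1 / (2 * (1 + Λ)) := (min_le_right _ _).trans (min_le_right _ _)
    rw [le_div_iff₀ (by positivity)] at this
    linarith
  let U : Set ℂ := Complex.re ⁻¹' Set.Ioo (-s) s ∩ Complex.im ⁻¹' Set.Ioo (-s) (1 + s)
  have hU : IsOpen U := (isOpen_Ioo.preimage Complex.continuous_re).inter
    (isOpen_Ioo.preimage Complex.continuous_im)
  have hUc : IsPreconnected U :=
    (((convex_Ioo (-s) s).linear_preimage Complex.reLm).inter
      ((convex_Ioo (-s) (1 + s)).linear_preimage Complex.imLm)).isPreconnected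
  have hU0 : (0 : ℂ) ∈ U := ⟨by simp [hs0], by simp [hs0]; linarith⟩
  have hUI : Complex.I ∈ U := ⟨by simp [hs0], by simp [hs0]; linarith⟩
  set C : ℝ := (Fintype.card (Fin n ⊕ Fin n)).factorial
    • (2 * (1 + Λ)) ^ Fintype.card (Fin n ⊕ Fin n) with hC
  have hd := differentiableOn_integral (μ := volume) hU
    (f := fun z (p : Euc n × Euc n) =>
      (jacMat (F' p.1) (F' p.2) z).det * Complex.exp (-(1 / 2) * phase F z p))
    (g := fun p => C * Real.exp (-(s / 2) * (‖p.1‖ ^ 2 + ‖p.2‖ ^ 2)))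
    (fun z _ => (continuous_integrand h z).aestronglyMeasurable)
    (fun p => by
      refine Differentiable.differentiableOn ?_
      refine (jacMat_differentiable _ _).mul ?_
      unfold phase
      fun_prop)
    ((gaussian_integrable (by positivity)).const_mul C)
    (by
      rintro z ⟨⟨hz1, hz2⟩, hz3, hz4⟩ p
      have hre : |z.re| ≤ s := abs_le.2 ⟨hz1.le, hz2.le⟩
      have hzn : ‖z‖ ≤ 4 := by
        refine (Complex.norm_le_abs_re_add_abs_im z).trans ?_
        have : |z.im| ≤ 2 := abs_le.2 ⟨by linarith, by linarith⟩
        linarith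
      rw [norm_mul, Complex.norm_exp]
      refine mul_le_mul (jacMat_bound (h.norm_deriv _) (h.norm_deriv _) hzn)
        (Real.exp_le_exp.2 ?_) (Real.exp_pos _).le (by positivity)
      have h1 := phase_re_lower h hs0 hs1 hs2 hre hz3.le hz4.le p
      have h2 : (-(1 / 2) * phase F z p).re = -(1 / 2) * (phase F z p).re := by
        simp
      rw [h2]
      linarith)
  have key := AnalyticOnNhd.eqOn_of_preconnected_of_frequently_eq
    (hd.analyticOnNhd hU) (g := fun _ => (((2 * Real.pi) ^ n : ℝ) : ℂ))
    analyticOnNhd_const hUc hU0 (by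
      have ht : Filter.Tendsto (fun x : ℝ => (x : ℂ)) (nhdsWithin 0 {0}ᶜ)
          (nhdsWithin (0 : ℂ) {0}ᶜ) := by
        refine tendsto_nhdsWithin_iff.2 ⟨?_, ?_⟩
        · have := (Complex.continuous_ofReal.tendsto (0 : ℝ)).mono_left
            (nhdsWithin_le_nhds (s := {0}ᶜ))
          simpa using this
        · filter_upwards [self_mem_nhdsWithin] with x hx
          simpa using hx
      refine ht.frequently (Filter.Eventually.frequently ?_)
      have h3 : ∀ᶠ x : ℝ in nhdsWithin 0 {0}ᶜ, x ∈ Set.Ioo (-s) s :=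
        nhdsWithin_le_nhds (Ioo_mem_nhds (by linarith) hs0)
      filter_upwards [h3] with ε hε
      have hε' : |ε| * Λ ≤ 1 / 2 :=
        (mul_le_mul_of_nonneg_right (abs_le.2 ⟨hε.1.le, hε.2.le⟩) hΛ).trans hs3
      rw [← psi_integral h hε', ← integral_complex_ofReal]
      refine integral_congr_ae (Filter.Eventually.of_forall fun p => ?_)
      simp only [jacMat_real, phase_real]
      push_cast
      ring_nf)
  exact key hUI

/-- Absolute values in `integral_continuation`: at `ε = I` the modulus of the Gaussian factor is
`exp (-qM F p / 2)`. -/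
theorem lintegral_det_ge (h : RegMono F F' δ Λ) :
    ENNReal.ofReal ((2 * Real.pi) ^ n) ≤ ∫⁻ p : Euc n × Euc n,
      ENNReal.ofReal ((1 / 2) ^ n * |(matE (F' p.1 + F' p.2)).det| *
        Real.exp (-(1 / 2) * qM F p)) := by
  have h1 := integral_continuation h
  have h2 := enorm_integral_le_lintegral_enorm (μ := volume) fun p : Euc n × Euc n =>
    (jacMat (F' p.1) (F' p.2) Complex.I).det * Complex.exp (-(1 / 2) * phase F Complex.I p)
  rw [h1] at h2
  have h3 : ‖(((2 * Real.pi) ^ n : ℝ) : ℂ)‖ₑ = ENNReal.ofReal ((2 * Real.pi) ^ n) := by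
    rw [← ofReal_norm, Complex.norm_real, Real.norm_of_nonneg (by positivity)]
  rw [h3] at h2
  refine h2.trans (le_of_eq (lintegral_congr fun p => ?_))
  have h4 : (-(1 / 2) * phase F Complex.I p).re = -(1 / 2) * qM F p := by
    rw [← phase_I]; simp
  rw [← ofReal_norm, norm_mul, Complex.norm_exp, h4, jacMat_I, norm_mul, norm_pow,
    Complex.norm_real, Real.norm_eq_abs]
  norm_num

/-- The map sending `(a, b)` to the midpoint of `a` and `b` and to half the difference of the
values of `F`. -/
def theta (F : Euc n → Euc n) (p : Euc n × Euc n) : Euc n × Euc n :=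
  ((1 / 2 : ℝ) • (p.1 + p.2), (1 / 2 : ℝ) • (F p.1 - F p.2))

/-- The derivative of `theta F` when `A` and `B` are the derivatives of `F` at the two points. -/
def theta' (A B : Euc n →L[ℝ] Euc n) : Euc n × Euc n →L[ℝ] Euc n × Euc n :=
  blockCLM ((1 / 2 : ℝ) • ContinuousLinearMap.id ℝ _) ((1 / 2 : ℝ) • ContinuousLinearMap.id ℝ _)
    ((1 / 2 : ℝ) • A) ((-(1 / 2) : ℝ) • B)

theorem theta_hasFDerivAt (hF : ∀ a, HasFDerivAt F (F' a) a) (p : Euc n × Euc n) :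
    HasFDerivAt (theta F) (theta' (F' p.1) (F' p.2)) p := by
  have h1 : HasFDerivAt (fun p : Euc n × Euc n => p.1) (ContinuousLinearMap.fst ℝ _ _) p :=
    hasFDerivAt_fst
  have h2 : HasFDerivAt (fun p : Euc n × Euc n => p.2) (ContinuousLinearMap.snd ℝ _ _) p :=
    hasFDerivAt_snd
  have h3 := (hF p.1).comp p h1
  have h4 := (hF p.2).comp p h2
  have h5 := (h1.add h2).const_smul (1 / 2 : ℝ)
  have h6 := (h3.sub h4).const_smul (1 / 2 : ℝ)
  refine (h5.prodMk h6).congr_fderiv ?_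
  refine ContinuousLinearMap.ext fun q => Prod.ext ?_ ?_
  · simp [theta', blockCLM]
  · simp [theta', blockCLM, sub_eq_add_neg]

theorem theta_injective (h : RegMono F F' δ Λ) : Function.Injective (theta F) := by
  intro p q hpq
  have e1 : p.1 - q.1 = -(p.2 - q.2) := by
    have := congrArg (fun w : Euc n × Euc n => (2 : ℝ) • w.1) hpq
    simp only [theta, smul_smul] at this
    norm_num at this
    rw [← sub_eq_zero] at this ⊢
    rw [← this]; abel
  have e2 : F p.1 - F q.1 = F p.2 - F q.2 := by
    have := congrArg (fun w : Euc n × Euc n => (2 : ℝ) • w.2) hpq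
    simp only [theta, smul_smul] at this
    norm_num at this
    rw [← sub_eq_zero] at this ⊢
    rw [← this]; abel
  have m1 := h.mono p.1 q.1
  have m2 := h.mono p.2 q.2
  rw [e2, e1, norm_neg, inner_neg_right] at m1
  have hδ := h.pos
  have h0 : ‖p.2 - q.2‖ = 0 := by
    have : δ * ‖p.2 - q.2‖ ^ 2 ≤ 0 := by linarith
    have : ‖p.2 - q.2‖ ^ 2 ≤ 0 := by
      by_contra hc; push Not at hc
      linarith [mul_pos hδ hc]
    exact pow_eq_zero_iff (two_ne_zero) |>.1 (le_antisymm this (sq_nonneg _))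
  have h2 : p.2 = q.2 := sub_eq_zero.1 (norm_eq_zero.1 h0)
  have h1 : p.1 = q.1 := by
    rw [h2, sub_self, neg_zero] at e1; exact sub_eq_zero.1 e1
  exact Prod.ext h1 h2

theorem theta'_det (A B : Euc n →L[ℝ] Euc n) :
    |(theta' A B).det| = (1 / 4) ^ n * |(matE (A + B)).det| := by
  have h1 : Matrix.fromBlocks ((2 : ℝ) • 1) 0 0 ((2 : ℝ) • (1 : Matrix (Fin n) (Fin n) ℝ)) *
      Matrix.fromBlocks (matE ((1 / 2 : ℝ) • ContinuousLinearMap.id ℝ _))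
        (matE ((1 / 2 : ℝ) • ContinuousLinearMap.id ℝ _)) (matE ((1 / 2 : ℝ) • A))
        (matE ((-(1 / 2) : ℝ) • B)) = Matrix.fromBlocks 1 1 (matE A) (-matE B) := by
    rw [Matrix.fromBlocks_multiply]
    congr 1 <;> simp [matE_smul, matE_one]
  have h2 := congrArg Matrix.det h1
  rw [Matrix.det_mul, Matrix.det_fromBlocks_zero₂₁, Matrix.det_fromBlocks_one₁₁, Matrix.det_smul,
    Matrix.det_one, mul_one, mul_one, Fintype.card_fin, ← det_blockCLM] at h2
  change _ * (theta' A B).det = _ at h2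
  have h3 : -matE B - matE A = -(matE (A + B)) := by rw [matE_add]; abel
  rw [h3, Matrix.det_neg] at h2
  have h4 := congrArg abs h2
  rw [abs_mul, abs_mul, abs_mul, abs_pow, abs_pow, abs_neg, abs_one, one_pow, one_mul, abs_two] at h4
  rw [← h4, ← mul_pow, ← mul_assoc, ← mul_pow]
  norm_num

/-- The transport form of the lower bound: any function of the midpoint and half-difference that
dominates the Gaussian-type weight has total integral at least `π ^ n`. -/
theorem pi_pow_le_lintegral (h : RegMono F F' δ Λ) (G : Euc n × Euc n → ℝ≥0∞)
    (hG : ∀ p, ENNReal.ofReal (Real.exp (-(1 / 2) * qM F p)) ≤ G (theta F p)) :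
    ENNReal.ofReal (Real.pi ^ n) ≤ ∫⁻ w, G w := by
  have : (volume : Measure (Euc n × Euc n)).IsAddHaarMeasure := by
    rw [Measure.volume_eq_prod]; infer_instance
  have h1 := lintegral_image_eq_lintegral_abs_det_fderiv_mul volume MeasurableSet.univ
    (fun p _ => (theta_hasFDerivAt h.deriv p).hasFDerivWithinAt) (theta_injective h).injOn G
  rw [setLIntegral_univ] at h1
  have h2 := lintegral_det_ge h
  have h3 : ∀ p : Euc n × Euc n, ENNReal.ofReal ((1 / 2) ^ n * |(matE (F' p.1 + F' p.2)).det| *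
        Real.exp (-(1 / 2) * qM F p)) ≤
      2 ^ n * (ENNReal.ofReal |(theta' (F' p.1) (F' p.2)).det| * G (theta F p)) := by
    intro p
    have e : (1 / 2 : ℝ) ^ n * |(matE (F' p.1 + F' p.2)).det| * Real.exp (-(1 / 2) * qM F p)
        = 2 ^ n * (|(theta' (F' p.1) (F' p.2)).det| * Real.exp (-(1 / 2) * qM F p)) := by
      rw [theta'_det, ← mul_assoc, ← mul_assoc, ← mul_pow]
      norm_num
    rw [e, ENNReal.ofReal_mul (by positivity), ENNReal.ofReal_mul (by positivity),
      ENNReal.ofReal_pow (by norm_num), ENNReal.ofReal_ofNat]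
    gcongr
    exact hG p
  have h4 : ENNReal.ofReal ((2 * Real.pi) ^ n) ≤ 2 ^ n * ∫⁻ w, G w := by
    refine h2.trans ((lintegral_mono h3).trans ?_)
    rw [lintegral_const_mul' _ _ (by finiteness), ← h1]
    gcongr
    exact Measure.restrict_le_self
  rw [mul_pow, ENNReal.ofReal_mul (by positivity), ENNReal.ofReal_pow (by norm_num),
    ENNReal.ofReal_ofNat] at h4
  exact (ENNReal.mul_le_mul_iff_right (by simp) (by finiteness)).1 h4

end

/-! ### A smooth monotone field with values near a polar body -/

section
variable {n : ℕ} (Y : Finset (Euc n)) (s : ℝ)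

/-- The partition function `∑ cosh (s ⟪y, x⟫)`. -/
def lseC (x : Euc n) : ℝ := ∑ y ∈ Y, Real.cosh (s * ⟪y, x⟫)

/-- The unnormalized gradient `∑ sinh (s ⟪y, x⟫) y`. -/
def lseV (x : Euc n) : Euc n := ∑ y ∈ Y, Real.sinh (s * ⟪y, x⟫) • y

/-- The gradient of `s⁻¹ log ∑ cosh (s ⟪y, x⟫)`, a smooth approximation of `max |⟪y, x⟫|`. -/
def lseG (x : Euc n) : Euc n := (lseC Y s x)⁻¹ • lseV Y s x

/-- The derivative of `lseC`. -/
def lseC' (x : Euc n) : Euc n →L[ℝ] ℝ :=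
  ∑ y ∈ Y, (s * Real.sinh (s * ⟪y, x⟫)) • innerSL ℝ y

/-- The derivative of `lseV`. -/
def lseV' (x : Euc n) : Euc n →L[ℝ] Euc n :=
  ∑ y ∈ Y, (s * Real.cosh (s * ⟪y, x⟫)) • (innerSL ℝ y).smulRight y

/-- The derivative of `lseG`. -/
def lseG' (x : Euc n) : Euc n →L[ℝ] Euc n :=
  (lseC Y s x)⁻¹ • lseV' Y s x + (-((lseC Y s x) ^ 2)⁻¹ • lseC' Y s x).smulRight (lseV Y s x)

variable {Y s}

theorem abs_sinh_le_cosh (u : ℝ) : |Real.sinh u| ≤ Real.cosh u := by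
  refine abs_le_of_sq_le_sq (by linarith [Real.cosh_sq u]) (Real.cosh_pos u).le

theorem lseC_pos (hY : Y.Nonempty) (x : Euc n) : 0 < lseC Y s x :=
  Finset.sum_pos (fun _ _ => Real.cosh_pos _) hY

theorem lseC_hasFDerivAt (x : Euc n) : HasFDerivAt (lseC Y s) (lseC' Y s x) x := by
  unfold lseC lseC'
  refine HasFDerivAt.fun_sum fun y _ => ?_
  have h1 : HasFDerivAt (fun x : Euc n => s * ⟪y, x⟫) (s • innerSL ℝ y) x :=
    (innerSL ℝ y).hasFDerivAt.const_mul s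
  refine h1.cosh.congr_fderiv ?_
  rw [smul_smul, mul_comm]

theorem lseV_hasFDerivAt (x : Euc n) : HasFDerivAt (lseV Y s) (lseV' Y s x) x := by
  unfold lseV lseV'
  refine HasFDerivAt.fun_sum fun y _ => ?_
  have h1 : HasFDerivAt (fun x : Euc n => s * ⟪y, x⟫) (s • innerSL ℝ y) x :=
    (innerSL ℝ y).hasFDerivAt.const_mul s
  refine (h1.sinh.smul_const y).congr_fderiv ?_
  ext1 v
  simp [smul_smul]
  ring_nf

theorem lseG_hasFDerivAt (hY : Y.Nonempty) (x : Euc n) :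
    HasFDerivAt (lseG Y s) (lseG' Y s x) x := by
  have h1 := (hasDerivAt_inv (lseC_pos (s := s) hY x).ne').comp_hasFDerivAt x
    (lseC_hasFDerivAt (Y := Y) (s := s) x)
  refine (h1.smul (lseV_hasFDerivAt x)).congr_fderiv ?_
  rfl

theorem lseG'_continuous (hY : Y.Nonempty) : Continuous (lseG' Y s) := by
  have hc : Continuous (lseC Y s) := by unfold lseC; fun_prop
  have hv : Continuous (lseV Y s) := by unfold lseV; fun_prop
  have hc' : Continuous (lseC' Y s) := by unfold lseC'; fun_prop
  have hv' : Continuous (lseV' Y s) := by unfold lseV'; fun_prop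
  have h0 : ∀ x, lseC Y s x ≠ 0 := fun x => (lseC_pos hY x).ne'
  unfold lseG'
  refine ((hc.inv₀ h0).smul hv').add ?_
  have : Continuous fun x => (ContinuousLinearMap.smulRightL ℝ (Euc n) (Euc n)
      (-((lseC Y s x) ^ 2)⁻¹ • lseC' Y s x)) (lseV Y s x) := by
    refine Continuous.clm_apply ?_ hv
    refine (ContinuousLinearMap.continuous _).comp ?_
    exact (((hc.pow 2).inv₀ (fun x => pow_ne_zero 2 (h0 x))).neg).smul hc'
  exact this

theorem lseV_norm_le {R : ℝ} (hR : ∀ y ∈ Y, ‖y‖ ≤ R) (x : Euc n) :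
    ‖lseV Y s x‖ ≤ R * lseC Y s x := by
  unfold lseV lseC
  rw [Finset.mul_sum]
  refine (norm_sum_le _ _).trans (Finset.sum_le_sum fun y hy => ?_)
  rw [norm_smul, mul_comm, Real.norm_eq_abs]
  exact mul_le_mul (hR y hy) (abs_sinh_le_cosh _) (abs_nonneg _)
    ((norm_nonneg _).trans (hR y hy))

theorem lseG'_norm_le (hY : Y.Nonempty) (hs : 0 < s) {R : ℝ} (hR : ∀ y ∈ Y, ‖y‖ ≤ R)
    (x : Euc n) : ‖lseG' Y s x‖ ≤ 2 * s * R ^ 2 := by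
  obtain ⟨y0, hy0⟩ := hY
  have hR0 : 0 ≤ R := (norm_nonneg _).trans (hR y0 hy0)
  have hc := lseC_pos (s := s) ⟨y0, hy0⟩ x
  have h1 : ‖lseV' Y s x‖ ≤ s * R ^ 2 * lseC Y s x := by
    unfold lseV' lseC
    rw [Finset.mul_sum]
    refine (norm_sum_le _ _).trans (Finset.sum_le_sum fun y hy => ?_)
    rw [norm_smul, ContinuousLinearMap.norm_smulRight_apply, innerSL_apply_norm, norm_mul,
      Real.norm_of_nonneg hs.le, Real.norm_of_nonneg (Real.cosh_pos _).le]
    have := mul_le_mul (hR y hy) (hR y hy) (norm_nonneg _) hR0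
    calc s * Real.cosh (s * ⟪y, x⟫) * (‖y‖ * ‖y‖) ≤ s * Real.cosh (s * ⟪y, x⟫) * (R * R) := by
          gcongr
      _ = _ := by ring
  have h2 : ‖lseC' Y s x‖ ≤ s * R * lseC Y s x := by
    unfold lseC' lseC
    rw [Finset.mul_sum]
    refine (norm_sum_le _ _).trans (Finset.sum_le_sum fun y hy => ?_)
    rw [norm_smul, innerSL_apply_norm, norm_mul, Real.norm_of_nonneg hs.le, Real.norm_eq_abs]
    calc s * |Real.sinh (s * ⟪y, x⟫)| * ‖y‖ ≤ s * Real.cosh (s * ⟪y, x⟫) * R := by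
          gcongr
          · exact (abs_sinh_le_cosh _)
          · exact hR y hy
      _ = _ := by ring
  have h3 := lseV_norm_le (s := s) hR x
  unfold lseG'
  refine (norm_add_le _ _).trans ?_
  rw [norm_smul, ContinuousLinearMap.norm_smulRight_apply, norm_smul, norm_neg, norm_inv, norm_inv,
    norm_pow, Real.norm_of_nonneg hc.le]
  calc (lseC Y s x)⁻¹ * ‖lseV' Y s x‖ + (lseC Y s x ^ 2)⁻¹ * ‖lseC' Y s x‖ * ‖lseV Y s x‖
      ≤ (lseC Y s x)⁻¹ * (s * R ^ 2 * lseC Y s x)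
        + (lseC Y s x ^ 2)⁻¹ * (s * R * lseC Y s x) * (R * lseC Y s x) := by gcongr
    _ = _ := by field_simp; ring

/-- The Hessian of the log-sum is positive semidefinite, by the Cauchy–Schwarz inequality. -/
theorem lseG'_nonneg (hY : Y.Nonempty) (hs : 0 < s) (x v : Euc n) :
    0 ≤ ⟪lseG' Y s x v, v⟫ := by
  have hc := lseC_pos (s := s) hY x
  set A : ℝ := ∑ y ∈ Y, Real.cosh (s * ⟪y, x⟫) * ⟪y, v⟫ ^ 2 with hA
  set B : ℝ := ∑ y ∈ Y, Real.sinh (s * ⟪y, x⟫) * ⟪y, v⟫ with hB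
  have e1 : ⟪lseV' Y s x v, v⟫ = s * A := by
    rw [hA, Finset.mul_sum, lseV', sum_apply, sum_inner]
    refine Finset.sum_congr rfl fun y _ => ?_
    simp [real_inner_smul_left]; ring
  have e2 : lseC' Y s x v = s * B := by
    rw [hB, Finset.mul_sum, lseC', sum_apply]
    refine Finset.sum_congr rfl fun y _ => ?_
    simp; ring
  have e3 : ⟪lseV Y s x, v⟫ = B := by
    rw [hB, lseV, sum_inner]
    simp [real_inner_smul_left]
  have hBA : B ^ 2 ≤ lseC Y s x * A := by
    refine Finset.sum_sq_le_sum_mul_sum_of_sq_le_mul Y (fun y _ => (Real.cosh_pos _).le)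
      (fun y _ => mul_nonneg (Real.cosh_pos _).le (sq_nonneg _)) fun y _ => ?_
    have h1 := Real.cosh_sq (s * ⟪y, x⟫)
    have h2 := sq_nonneg ⟪y, v⟫
    nlinarith
  have e4 : ⟪lseG' Y s x v, v⟫ = s * ((lseC Y s x)⁻¹ * A - (lseC Y s x ^ 2)⁻¹ * B ^ 2) := by
    simp only [lseG', add_apply, smul_apply,
      ContinuousLinearMap.smulRight_apply, inner_add_left, real_inner_smul_left, e1, e2, e3,
      smul_eq_mul]
    ring
  rw [e4]
  refine mul_nonneg hs.le (sub_nonneg.2 ?_)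
  rw [inv_mul_le_iff₀ (by positivity)]
  calc B ^ 2 ≤ lseC Y s x * A := hBA
    _ = _ := by field_simp

/-- Adding `δ` times the identity makes the gradient of the log-sum strongly monotone. -/
theorem regMono_lse (hY : Y.Nonempty) (hs : 0 < s) {δ R : ℝ} (hδ : 0 < δ)
    (hR : ∀ y ∈ Y, ‖y‖ ≤ R) :
    RegMono (fun x => lseG Y s x + δ • x)
      (fun x => lseG' Y s x + δ • ContinuousLinearMap.id ℝ (Euc n)) δ (2 * s * R ^ 2 + δ) := by
  have hd : ∀ a, HasFDerivAt (fun x => lseG Y s x + δ • x)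
      (lseG' Y s a + δ • ContinuousLinearMap.id ℝ (Euc n)) a := fun a =>
    (lseG_hasFDerivAt hY a).add ((hasFDerivAt_id a).const_smul δ)
  refine ⟨hd, (lseG'_continuous hY).add continuous_const, ?_, ?_, ?_, hδ, by positivity⟩
  · intro a b
    have hb : ∀ x, ‖lseG' Y s x + δ • ContinuousLinearMap.id ℝ (Euc n)‖ ≤ 2 * s * R ^ 2 + δ := by
      intro x
      refine (norm_add_le _ _).trans (add_le_add (lseG'_norm_le hY hs hR x) ?_)
      rw [norm_smul, Real.norm_of_nonneg hδ.le]
      exact mul_le_of_le_one_right hδ.le ContinuousLinearMap.norm_id_le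
    exact Convex.norm_image_sub_le_of_norm_hasFDerivWithin_le (𝕜 := ℝ) (s := Set.univ)
      (f := fun x => lseG Y s x + δ • x) (C := 2 * s * R ^ 2 + δ)
      (f' := fun x => lseG' Y s x + δ • ContinuousLinearMap.id ℝ (Euc n))
      (fun x _ => (hd x).hasFDerivWithinAt) (fun x _ => hb x) convex_univ
      (Set.mem_univ b) (Set.mem_univ a)
  · intro a b
    have hline : ∀ r : ℝ, HasDerivAt (fun r : ℝ => ⟪lseG Y s (b + r • (a - b)), a - b⟫)
        ⟪lseG' Y s (b + r • (a - b)) (a - b), a - b⟫ r := by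
      intro r
      have h1 : HasDerivAt (fun r : ℝ => b + r • (a - b)) (a - b) r := by
        simpa using ((hasDerivAt_id r).smul_const (a - b)).const_add b
      have h2 := (lseG_hasFDerivAt (s := s) hY (b + r • (a - b))).comp_hasDerivAt r h1
      simpa using h2.inner ℝ (hasDerivAt_const r (a - b))
    have hm : Monotone (fun r : ℝ => ⟪lseG Y s (b + r • (a - b)), a - b⟫) :=
      monotone_of_hasDerivAt_nonneg hline (fun r => lseG'_nonneg hY hs _ _)
    have h01 := hm (zero_le_one)
    simp only [zero_smul, add_zero, one_smul, add_sub_cancel] at h01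
    have : lseG Y s a + δ • a - (lseG Y s b + δ • b)
        = (lseG Y s a - lseG Y s b) + δ • (a - b) := by rw [smul_sub]; abel
    rw [this, inner_add_left, real_inner_smul_left, real_inner_self_eq_norm_sq, inner_sub_left]
    linarith
  · simp [lseG, lseV]

/-- The values of the field are convex combinations of points `t • y` with `y ∈ Y` and `|t| ≤ 1`. -/
theorem lseG_mem (hY : Y.Nonempty) {C : Set (Euc n)} (hC : Convex ℝ C)
    (hneg : ∀ y ∈ C, -y ∈ C) (hYC : ∀ y ∈ Y, y ∈ C) (x : Euc n) : lseG Y s x ∈ C := by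
  have hc := lseC_pos (s := s) hY x
  have e : lseG Y s x = ∑ y ∈ Y, (Real.cosh (s * ⟪y, x⟫) / lseC Y s x) •
      ((Real.sinh (s * ⟪y, x⟫) / Real.cosh (s * ⟪y, x⟫)) • y) := by
    rw [lseG, lseV, Finset.smul_sum]
    refine Finset.sum_congr rfl fun y _ => ?_
    rw [smul_smul, smul_smul]
    congr 1
    have := Real.cosh_pos (s * ⟪y, x⟫)
    field_simp
  rw [e]
  refine hC.sum_mem (fun y _ => div_nonneg (Real.cosh_pos _).le hc.le) ?_ fun y hy => ?_
  · rw [← Finset.sum_div]; exact div_self hc.ne'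
  · have h1 := Real.cosh_pos (s * ⟪y, x⟫)
    have h2 : |Real.sinh (s * ⟪y, x⟫) / Real.cosh (s * ⟪y, x⟫)| ≤ 1 := by
      rw [abs_div, abs_of_pos h1, div_le_one h1]
      exact (abs_sinh_le_cosh _)
    set τ := Real.sinh (s * ⟪y, x⟫) / Real.cosh (s * ⟪y, x⟫)
    have h3 := abs_le.1 h2
    have := hC (hYC y hy) (hneg y (hYC y hy)) (a := (1 + τ) / 2) (b := (1 - τ) / 2)
      (by linarith) (by linarith) (by ring)
    rwa [smul_neg, ← sub_eq_add_neg, ← sub_smul,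
      show (1 + τ) / 2 - (1 - τ) / 2 = τ by ring] at this

/-- From `t ≤ exp t` with `t = M - u` and `t = M + u`; it is used with `cosh M` a summand of the
partition function. -/
theorem cosh_sinh_bound (u M : ℝ) :
    M * Real.cosh u - u * Real.sinh u ≤ 2 * Real.cosh M := by
  have h1 : (M - u) * Real.exp u ≤ Real.exp M := by
    have := Real.add_one_le_exp (M - u)
    rw [Real.exp_sub, le_div_iff₀ (Real.exp_pos u)] at this
    linarith [Real.exp_pos u]
  have h2 : (M + u) * Real.exp (-u) ≤ Real.exp M := by
    have := Real.add_one_le_exp (M - -u)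
    rw [Real.exp_sub, le_div_iff₀ (Real.exp_pos (-u))] at this
    linarith [Real.exp_pos (-u)]
  rw [Real.cosh_eq, Real.sinh_eq, Real.cosh_eq]
  linarith [Real.exp_pos (-M)]

/-- The radial derivative of the log-sum dominates each `|⟪y, a⟫|` up to an error that
vanishes as `s → ∞`. -/
theorem inner_lseG_ge (hs : 0 < s) {y0 : Euc n} (hy0 : y0 ∈ Y) (a : Euc n) :
    |⟪y0, a⟫| - 2 * Y.card / s ≤ ⟪lseG Y s a, a⟫ := by
  have hc := lseC_pos (s := s) ⟨y0, hy0⟩ a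
  set M := s * |⟪y0, a⟫| with hM
  have h1 : ∑ y ∈ Y, (M * Real.cosh (s * ⟪y, a⟫) - (s * ⟪y, a⟫) * Real.sinh (s * ⟪y, a⟫))
      ≤ Y.card * (2 * Real.cosh M) := by
    rw [← nsmul_eq_mul]
    exact Finset.sum_le_card_nsmul _ _ _ fun y _ => cosh_sinh_bound _ _
  have h2 : Real.cosh M ≤ lseC Y s a := by
    have : Real.cosh M = Real.cosh (s * ⟪y0, a⟫) := by
      rw [← Real.cosh_abs (s * ⟪y0, a⟫), abs_mul, abs_of_pos hs]
    rw [this]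
    exact Finset.single_le_sum (f := fun y => Real.cosh (s * ⟪y, a⟫))
      (fun y _ => (Real.cosh_pos _).le) hy0
  have h3 : ∑ y ∈ Y, (s * ⟪y, a⟫) * Real.sinh (s * ⟪y, a⟫) = s * ⟪lseV Y s a, a⟫ := by
    rw [lseV, sum_inner, Finset.mul_sum]
    refine Finset.sum_congr rfl fun y _ => ?_
    rw [real_inner_smul_left]; ring
  rw [Finset.sum_sub_distrib, ← Finset.mul_sum, h3] at h1
  change M * lseC Y s a - _ ≤ _ at h1
  have h4 : (Y.card : ℝ) * (2 * Real.cosh M) ≤ Y.card * (2 * lseC Y s a) := by gcongr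
  rw [lseG, real_inner_smul_left, ← sub_nonneg]
  have : (lseC Y s a)⁻¹ * ⟪lseV Y s a, a⟫ - (|⟪y0, a⟫| - 2 * Y.card / s)
      = (s * lseC Y s a)⁻¹ *
        (s * ⟪lseV Y s a, a⟫ - M * lseC Y s a + Y.card * (2 * lseC Y s a)) := by
    rw [hM]; field_simp; ring
  rw [this]
  exact mul_nonneg (by positivity) (by linarith)

end

/-! ### The integral inequality for maxima of linear functionals -/

section
variable {n : ℕ}

/-- The weight `qM / 2` of a pair `(a, b)` controls the functional `y0` at the midpoint of `a` and `b`
and the distance to `C` of the half-difference of the values; the term in `δ` pays for the distance,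
the log-sum part of the half-difference being in `C`. -/
theorem qM_lse_ge {Y : Finset (Euc n)} {s δ : ℝ} (hs : 0 < s) (hδ : 0 < δ) {C : Set (Euc n)}
    (hC : Convex ℝ C) (hneg : ∀ y ∈ C, -y ∈ C) (hYC : ∀ y ∈ Y, y ∈ C) {y0 : Euc n} (hy0 : y0 ∈ Y)
    (p : Euc n × Euc n) :
    |⟪y0, (theta (fun x => lseG Y s x + δ • x) p).1⟫| - 2 * Y.card / s
      + Metric.infDist (theta (fun x => lseG Y s x + δ • x) p).2 C ^ 2 / δ
      ≤ 1 / 2 * qM (fun x => lseG Y s x + δ • x) p := by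
  obtain ⟨a, b⟩ := p
  have ha := inner_lseG_ge hs hy0 a
  have hb := inner_lseG_ge hs hy0 b
  have h1 : |⟪y0, (1 / 2 : ℝ) • (a + b)⟫| ≤ 1 / 2 * (|⟪y0, a⟫| + |⟪y0, b⟫|) := by
    rw [real_inner_smul_right, inner_add_right, abs_mul, abs_of_pos (by norm_num : (0 : ℝ) < 1 / 2)]
    gcongr
    exact abs_add_le _ _
  -- The half-difference of the full field is within `δ / 2 * ‖a - b‖` of this point of `C`.
  have hm : (1 / 2 : ℝ) • (lseG Y s a - lseG Y s b) ∈ C := by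
    have := hC (lseG_mem (s := s) ⟨y0, hy0⟩ hC hneg hYC a)
      (hneg _ (lseG_mem (s := s) ⟨y0, hy0⟩ hC hneg hYC b)) (a := 1 / 2) (b := 1 / 2)
      (by norm_num) (by norm_num) (by norm_num)
    rwa [← smul_add, ← sub_eq_add_neg] at this
  have h2 : Metric.infDist ((1 / 2 : ℝ) • (lseG Y s a + δ • a - (lseG Y s b + δ • b))) C
      ≤ δ / 2 * ‖a - b‖ := by
    refine (Metric.infDist_le_dist_of_mem hm).trans ?_
    rw [dist_eq_norm]
    have : (1 / 2 : ℝ) • (lseG Y s a + δ • a - (lseG Y s b + δ • b))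
        - (1 / 2 : ℝ) • (lseG Y s a - lseG Y s b) = (δ / 2) • (a - b) := by module
    rw [this, norm_smul, Real.norm_of_nonneg (by positivity)]
  have h3 : Metric.infDist ((1 / 2 : ℝ) • (lseG Y s a + δ • a - (lseG Y s b + δ • b))) C ^ 2 / δ
      ≤ δ / 4 * ‖a - b‖ ^ 2 := by
    rw [div_le_iff₀ hδ]
    calc _ ≤ (δ / 2 * ‖a - b‖) ^ 2 := pow_le_pow_left₀ Metric.infDist_nonneg h2 2
      _ = _ := by ring
  have h4 : ‖a - b‖ ^ 2 ≤ 2 * (‖a‖ ^ 2 + ‖b‖ ^ 2) := by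
    have := parallelogram_law_with_norm ℝ a b
    nlinarith [sq_nonneg ‖a + b‖]
  have h5 : δ / 4 * ‖a - b‖ ^ 2 ≤ δ / 4 * (2 * (‖a‖ ^ 2 + ‖b‖ ^ 2)) := by gcongr
  simp only [theta, qM, inner_add_left, real_inner_smul_left, real_inner_self_eq_norm_sq]
  linarith

/-- The transport inequality for the regularized field, with the resulting majorant in product form. -/
theorem pi_pow_le_smooth {p : Euc n → ℝ} (hpm : Measurable p) {Y : Finset (Euc n)}
    {C : Set (Euc n)} (hC : Convex ℝ C) (hCc : IsCompact C) (hneg : ∀ y ∈ C, -y ∈ C)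
    (hYC : ∀ y ∈ Y, y ∈ C)
    (hp : ∀ x, ∃ y ∈ Y, p x ≤ |⟪y, x⟫|) {s δ : ℝ} (hs : 0 < s) (hδ : 0 < δ) :
    ENNReal.ofReal (Real.pi ^ n) ≤ ENNReal.ofReal (Real.exp (2 * Y.card / s)) *
      (∫⁻ x, ENNReal.ofReal (Real.exp (-p x))) *
      ∫⁻ ξ : Euc n, ENNReal.ofReal (Real.exp (-(Metric.infDist ξ C ^ 2 / δ))) := by
  obtain ⟨y1, hy1, -⟩ := hp 0
  obtain ⟨R, hR⟩ := hCc.isBounded.exists_norm_le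
  have h := regMono_lse ⟨y1, hy1⟩ hs hδ (R := R) (fun y hy => hR y (hYC y hy))
  have key := pi_pow_le_lintegral h (fun w => ENNReal.ofReal (Real.exp (2 * Y.card / s)) *
    (ENNReal.ofReal (Real.exp (-p w.1)) *
      ENNReal.ofReal (Real.exp (-(Metric.infDist w.2 C ^ 2 / δ))))) ?_
  · refine key.trans (le_of_eq ?_)
    have hm1 : Measurable fun x => ENNReal.ofReal (Real.exp (-p x)) := by fun_prop
    have hm : Measurable fun ξ : Euc n =>
        ENNReal.ofReal (Real.exp (-(Metric.infDist ξ C ^ 2 / δ))) := by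
      have := Metric.continuous_infDist_pt (s := C)
      fun_prop
    rw [lintegral_const_mul' _ _ ENNReal.ofReal_ne_top, Measure.volume_eq_prod,
      lintegral_prod_mul hm1.aemeasurable hm.aemeasurable, mul_assoc]
  · intro q
    obtain ⟨y0, hy0, hle⟩ := hp (theta (fun x => lseG Y s x + δ • x) q).1
    have := qM_lse_ge hs hδ hC hneg hYC hy0 q
    rw [← ENNReal.ofReal_mul (Real.exp_pos _).le, ← ENNReal.ofReal_mul (Real.exp_pos _).le,
      ← Real.exp_add, ← Real.exp_add]
    refine ENNReal.ofReal_le_ofReal (Real.exp_le_exp.2 ?_)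
    linarith

/-- As `δ = 1 / (k + 1)` tends to `0`, the weight `exp (-dist² / δ)` concentrates on `C`. -/
theorem tendsto_lintegral_infDist {C : Set (Euc n)} (hCc : IsCompact C) (hne : C.Nonempty) :
    Filter.Tendsto (fun k : ℕ => ∫⁻ ξ : Euc n, ENNReal.ofReal
      (Real.exp (-(Metric.infDist ξ C ^ 2 / (1 / ((k : ℝ) + 1)))))) Filter.atTop
      (nhds (volume C)) := by
  have hlim : volume C = ∫⁻ ξ : Euc n, C.indicator 1 ξ := by
    rw [lintegral_indicator_one hCc.measurableSet]
  rw [hlim]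
  have hcont := Metric.continuous_infDist_pt (s := C)
  refine tendsto_lintegral_of_dominated_convergence
    (fun ξ : Euc n => ENNReal.ofReal (Real.exp (-(Metric.infDist ξ C ^ 2))))
    (fun k => ?_) (fun k => ?_) ?_ ?_
  · fun_prop
  · refine Filter.Eventually.of_forall fun ξ => ENNReal.ofReal_le_ofReal (Real.exp_le_exp.2 ?_)
    rw [neg_le_neg_iff, div_div_eq_mul_div, div_one]
    have : (0 : ℝ) ≤ k := Nat.cast_nonneg k
    nlinarith [sq_nonneg (Metric.infDist ξ C)]
  · obtain ⟨R, hR⟩ := hCc.isBounded.exists_norm_le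
    have hi : Integrable fun ξ : Euc n => Real.exp (R ^ 2) * Real.exp (-(1 / 2) * ‖ξ‖ ^ 2) := by
      refine Integrable.const_mul ?_ _
      have := (GaussianFourier.integrable_cexp_neg_mul_sq_norm_add (V := Euc n) (b := 1 / 2)
        (by norm_num) 0 0).norm
      refine this.congr (Filter.Eventually.of_forall fun ξ => ?_)
      simp [Complex.norm_exp, ← Complex.ofReal_pow]
    refine ne_top_of_le_ne_top (hi.lintegral_lt_top.ne) (lintegral_mono fun ξ => ?_)
    refine ENNReal.ofReal_le_ofReal ?_
    rw [← Real.exp_add]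
    refine Real.exp_le_exp.2 ?_
    obtain ⟨c, hc, hd⟩ := hCc.exists_infDist_eq_dist hne ξ
    rw [hd, dist_eq_norm]
    have h1 := hR c hc
    have h2 : ‖ξ‖ ≤ ‖ξ - c‖ + ‖c‖ := by simpa using norm_add_le (ξ - c) c
    have h3 : ‖ξ‖ ^ 2 ≤ (‖ξ - c‖ + R) ^ 2 :=
      pow_le_pow_left₀ (norm_nonneg _) (by linarith) 2
    nlinarith [sq_nonneg (‖ξ - c‖ - R)]
  · refine Filter.Eventually.of_forall fun ξ => ?_
    by_cases hξ : ξ ∈ C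
    · simp [hξ, Metric.infDist_zero_of_mem hξ]
    · rw [Set.indicator_of_notMem hξ, ← ENNReal.ofReal_zero]
      have hpos : 0 < Metric.infDist ξ C := (hCc.isClosed.notMem_iff_infDist_pos hne).1 hξ
      refine (ENNReal.continuous_ofReal.tendsto _).comp (Real.tendsto_exp_neg_atTop_nhds_zero.comp ?_)
      simp only [div_div_eq_mul_div, div_one]
      exact Filter.Tendsto.const_mul_atTop (by positivity)
        (Filter.tendsto_atTop_add_const_right _ _ tendsto_natCast_atTop_atTop)

/-- The limit `s → ∞`, `δ → 0` of the inequality for the regularized field. -/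
theorem pi_pow_le_lintegral_mul {p : Euc n → ℝ} (hpm : Measurable p)
    (hfin : ∫⁻ x, ENNReal.ofReal (Real.exp (-p x)) ≠ ⊤) {Y : Finset (Euc n)}
    {C : Set (Euc n)} (hC : Convex ℝ C) (hCc : IsCompact C) (hneg : ∀ y ∈ C, -y ∈ C)
    (hYC : ∀ y ∈ Y, y ∈ C) (hp : ∀ x, ∃ y ∈ Y, p x ≤ |⟪y, x⟫|) :
    ENNReal.ofReal (Real.pi ^ n) ≤ (∫⁻ x, ENNReal.ofReal (Real.exp (-p x))) * volume C := by
  obtain ⟨y1, hy1, -⟩ := hp 0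
  have h1 : Filter.Tendsto (fun k : ℕ => ENNReal.ofReal (Real.exp (2 * Y.card / ((k : ℝ) + 1))))
      Filter.atTop (nhds 1) := by
    rw [← ENNReal.ofReal_one]
    refine (ENNReal.continuous_ofReal.tendsto _).comp ?_
    rw [← Real.exp_zero]
    refine (Real.continuous_exp.tendsto _).comp ?_
    exact Filter.Tendsto.const_div_atTop
      (Filter.tendsto_atTop_add_const_right _ _ tendsto_natCast_atTop_atTop) _
  have h2 := ENNReal.Tendsto.mul (ENNReal.Tendsto.mul h1 (Or.inl one_ne_zero)
    (tendsto_const_nhds (x := ∫⁻ x, ENNReal.ofReal (Real.exp (-p x)))) (Or.inr ENNReal.one_ne_top))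
    (Or.inr hCc.measure_lt_top.ne) (tendsto_lintegral_infDist hCc ⟨y1, hYC y1 hy1⟩)
    (Or.inr (by rwa [one_mul]))
  rw [one_mul] at h2
  refine ge_of_tendsto' h2 fun k => ?_
  exact pi_pow_le_smooth hpm hC hCc hneg hYC hp (by positivity) (by positivity)

end

/-! ### Polar bodies -/

section
variable {n : ℕ} {A B : Set (Euc n)}

theorem polarBody_anti (h : A ⊆ B) : polarBody B ⊆ polarBody A := fun _ hx y hy => hx y (h hy)

theorem zero_mem_polarBody : (0 : Euc n) ∈ polarBody A := fun y _ => by simp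

theorem polarBody_convex : Convex ℝ (polarBody A) := by
  intro x hx y hy a b ha hb hab z hz
  rw [inner_add_left, real_inner_smul_left, real_inner_smul_left]
  have h1 := mul_le_mul_of_nonneg_left (hx z hz) ha
  have h2 := mul_le_mul_of_nonneg_left (hy z hz) hb
  linarith

theorem polarBody_isClosed : IsClosed (polarBody A) := by
  have : polarBody A = ⋂ y ∈ A, {x : Euc n | ⟪x, y⟫ ≤ 1} := by
    ext x; simp [polarBody]
  rw [this]
  exact isClosed_biInter fun y _ => isClosed_le (by fun_prop) continuous_const

theorem polarBody_neg (h : ∀ x ∈ A, -x ∈ A) : ∀ x ∈ polarBody A, -x ∈ polarBody A := by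
  intro x hx y hy
  have := hx (-y) (h y hy)
  rwa [inner_neg_right, ← inner_neg_left] at this

theorem polarBody_isCompact (h : A ∈ nhds (0 : Euc n)) : IsCompact (polarBody A) := by
  obtain ⟨r, hr, hrA⟩ := Metric.nhds_basis_closedBall.mem_iff.1 h
  refine (isCompact_closedBall (0 : Euc n) r⁻¹).of_isClosed_subset polarBody_isClosed ?_
  intro x hx
  rw [mem_closedBall_zero_iff]
  by_cases h0 : x = 0
  · rw [h0, norm_zero]; positivity
  have hx0 : 0 < ‖x‖ := norm_pos_iff.2 h0
  have hm : (r / ‖x‖) • x ∈ A := hrA (by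
    rw [mem_closedBall_zero_iff, norm_smul, Real.norm_of_nonneg (by positivity)]
    exact (div_mul_cancel₀ _ hx0.ne').le)
  have := hx _ hm
  rw [real_inner_smul_right, real_inner_self_eq_norm_sq] at this
  rw [le_inv_comm₀ hx0 hr, inv_eq_one_div, le_div_iff₀ hx0]
  calc r * ‖x‖ = r / ‖x‖ * ‖x‖ ^ 2 := by field_simp
    _ ≤ 1 := this

/-- Separation form of the bipolar theorem. -/
theorem exists_polar_gt (hA : Convex ℝ A) (hc : IsClosed A) (h0 : (0 : Euc n) ∈ A) {x : Euc n}
    (hx : x ∉ A) : ∃ y ∈ polarBody A, 1 < ⟪y, x⟫ := by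
  obtain ⟨f, u, h1, h2⟩ := geometric_hahn_banach_closed_point hA hc hx
  have hu : 0 < u := by simpa using h1 0 h0
  have hf : ∀ z, ⟪(InnerProductSpace.toDual ℝ (Euc n)).symm f, z⟫ = f z := fun z =>
    InnerProductSpace.toDual_symm_apply
  refine ⟨u⁻¹ • (InnerProductSpace.toDual ℝ (Euc n)).symm f, fun z hz => ?_, ?_⟩
  · rw [real_inner_smul_left, hf, inv_mul_le_iff₀ hu, mul_one]
    exact (h1 z hz).le
  · rw [real_inner_smul_left, hf, lt_inv_mul_iff₀ hu, mul_one]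
    exact h2

theorem bipolar_subset (hA : Convex ℝ A) (hc : IsClosed A) (h0 : (0 : Euc n) ∈ A) :
    polarBody (polarBody A) ⊆ A := by
  intro x hx
  by_contra hxA
  obtain ⟨y, hy, h1⟩ := exists_polar_gt hA hc h0 hxA
  have := hx y hy
  rw [real_inner_comm] at this
  linarith

theorem polarBody_subset_swap (hA : Convex ℝ A) (hc : IsClosed A) (h0 : (0 : Euc n) ∈ A)
    (h : polarBody A ⊆ B) : polarBody B ⊆ A :=
  (polarBody_anti h).trans (bipolar_subset hA hc h0)

/-- A convex body with the origin in its interior is, up to the factor `c > 1`, cut out by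
finitely many functionals from its polar. -/
theorem exists_finset_polar {S : Set (Euc n)} (hS : Convex ℝ S) (hSc : IsCompact S)
    (h0 : S ∈ nhds (0 : Euc n)) {c : ℝ} (hc : 1 < c) :
    ∃ Y : Finset (Euc n), (∀ y ∈ Y, y ∈ polarBody S) ∧
      ∀ x, ∃ y ∈ Y, gauge S x / c ≤ |⟪y, x⟫| := by
  have hc0 : 0 < c := by linarith
  have hcont := continuous_gauge hS h0
  have habs : Absorbent ℝ S := absorbent_nhds_zero h0
  have hz : (0 : Euc n) ∈ S := mem_of_mem_nhds h0
  have hE : IsCompact {x : Euc n | gauge S x = c} := by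
    refine (hSc.smul c).of_isClosed_subset (isClosed_eq hcont continuous_const) fun x hx => ?_
    rw [Set.mem_smul_set_iff_inv_smul_mem₀ hc0.ne', ← hSc.isClosed.closure_eq,
      ← gauge_le_one_iff_mem_closure hS h0, gauge_smul_of_nonneg (by positivity)]
    have : gauge S x = c := hx
    rw [this, smul_eq_mul, inv_mul_cancel₀ hc0.ne']
  obtain ⟨Y, hY⟩ := hE.elim_finite_subcover
    (fun y : polarBody S => {x : Euc n | 1 < ⟪(y : Euc n), x⟫})
    (fun y => isOpen_lt continuous_const (by fun_prop)) (by
      intro x hx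
      have hxS : x ∉ S := fun hxS => by
        have h1 : gauge S x = c := hx
        linarith [gauge_le_one_of_mem hxS]
      obtain ⟨y, hy, h1⟩ := exists_polar_gt hS hSc.isClosed hz hxS
      exact Set.mem_iUnion.2 ⟨⟨y, hy⟩, h1⟩)
  classical
  refine ⟨insert 0 (Y.image Subtype.val), ?_, fun x => ?_⟩
  · intro y hy
    rcases Finset.mem_insert.1 hy with rfl | hy
    · exact zero_mem_polarBody
    · obtain ⟨w, -, rfl⟩ := Finset.mem_image.1 hy
      exact w.2
  · rcases (gauge_nonneg x).eq_or_lt with hx | hx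
    · exact ⟨0, Finset.mem_insert_self _ _, by rw [← hx]; simp⟩
    · have hm : (c / gauge S x) • x ∈ {x : Euc n | gauge S x = c} := by
        change gauge S ((c / gauge S x) • x) = c
        rw [gauge_smul_of_nonneg (by positivity), smul_eq_mul, div_mul_cancel₀ _ hx.ne']
      obtain ⟨y, hy, h1⟩ := Set.mem_iUnion₂.1 (hY hm)
      refine ⟨y, Finset.mem_insert_of_mem (Finset.mem_image_of_mem _ hy), ?_⟩
      have h2 : 1 < ⟪(y : Euc n), (c / gauge S x) • x⟫ := h1
      rw [real_inner_smul_right] at h2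
      refine le_trans ?_ (le_abs_self _)
      rw [div_le_iff₀ hc0]
      rw [div_mul_eq_mul_div, lt_div_iff₀ hx] at h2
      linarith

/-! ### The Bourgain–Milman inequality -/

/-- The integral of `exp (-gauge)` is `n!` times the volume of the unit ball of the gauge, which for
`gauge S / c` is the dilate `c • S`. -/
theorem lintegral_exp_neg_gauge {S : Set (Euc n)} (hS : Convex ℝ S) (hSc : IsCompact S)
    (hneg : ∀ x ∈ S, -x ∈ S) (h0 : S ∈ nhds (0 : Euc n)) {c : ℝ} (hc : 1 < c) :
    ∫⁻ x, ENNReal.ofReal (Real.exp (-(gauge S x / c)))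
      ≤ n.factorial * (ENNReal.ofReal (c ^ n) * volume S) := by
  have hc0 : 0 < c := by linarith
  have hcont := continuous_gauge hS h0
  have habs : Absorbent ℝ S := absorbent_nhds_zero h0
  have hz : (0 : Euc n) ∈ S := mem_of_mem_nhds h0
  have hb : Bornology.IsVonNBounded ℝ S := (NormedSpace.isVonNBounded_iff ℝ).2 hSc.isBounded
  have hm := measure_lt_one_eq_integral_div_gamma (volume : Measure (Euc n))
    (g := fun x => gauge S x / c) (by simp)
    (fun x => by rw [gauge_neg hneg])
    (fun x y => by rw [← add_div]; gcongr; exact gauge_add_le hS habs x y)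
    (fun {x} hx => by
      have : gauge S x = 0 := by
        rcases div_eq_zero_iff.1 hx with h | h
        · exact h
        · exact absurd h hc0.ne'
      exact (gauge_eq_zero habs hb).1 this)
    (fun r x => by
      have : gauge S (r • x) = |r| * gauge S x := by
        rcases le_total 0 r with hr | hr
        · rw [gauge_smul_of_nonneg hr, abs_of_nonneg hr, smul_eq_mul]
        · rw [← neg_neg (r • x), gauge_neg hneg, ← neg_smul, gauge_smul_of_nonneg (by linarith),
            abs_of_nonpos hr, smul_eq_mul]
      rw [this, mul_div_assoc]) (p := 1) one_pos
  simp only [Real.rpow_one, div_one, finrank_euclideanSpace_fin, Real.Gamma_nat_eq_factorial] at hm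
  have hopen : 0 < volume {x : Euc n | gauge S x / c < 1} :=
    (isOpen_lt (by fun_prop) continuous_const).measure_pos _ ⟨0, by simp⟩
  -- A non-integrable integrand would give the open unit ball of the gauge measure zero.
  have hint : Integrable fun x : Euc n => Real.exp (-(gauge S x / c)) := by
    by_contra hni
    rw [hm, integral_undef hni] at hopen
    simp at hopen
  rw [← ofReal_integral_eq_lintegral_ofReal hint
    (Filter.Eventually.of_forall fun x => (Real.exp_pos _).le)]
  have hsub : {x : Euc n | gauge S x / c < 1} ⊆ c • S := by
    intro x hx
    have hx' : gauge S x / c < 1 := hx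
    rw [Set.mem_smul_set_iff_inv_smul_mem₀ hc0.ne', ← hSc.isClosed.closure_eq,
      ← gauge_le_one_iff_mem_closure hS h0, gauge_smul_of_nonneg (by positivity), smul_eq_mul,
      inv_mul_eq_div]
    exact hx'.le
  have hle := measure_mono (μ := volume) hsub
  rw [hm, Measure.addHaar_smul, finrank_euclideanSpace_fin, abs_of_nonneg (by positivity)] at hle
  refine le_trans (le_of_eq ?_) (mul_le_mul_right hle _)
  rw [← ENNReal.ofReal_natCast, ← ENNReal.ofReal_mul (by positivity)]
  congr 1
  field_simp

/-- A form of the Bourgain–Milman inequality: the volume product of a symmetric convex body is at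
least `π ^ n / n!`, here up to a factor `c ^ n` with `c > 1` arbitrary. -/
theorem bourgain_milman {S : Set (Euc n)} (hS : Convex ℝ S) (hSc : IsCompact S)
    (hneg : ∀ x ∈ S, -x ∈ S) (h0 : S ∈ nhds (0 : Euc n)) {c : ℝ} (hc : 1 < c) :
    ENNReal.ofReal (Real.pi ^ n)
      ≤ n.factorial * (ENNReal.ofReal (c ^ n) * volume S) * volume (polarBody S) := by
  obtain ⟨Y, hYS, hY⟩ := exists_finset_polar hS hSc h0 hc
  have hint := lintegral_exp_neg_gauge hS hSc hneg h0 hc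
  have hcont := continuous_gauge hS h0
  refine (pi_pow_le_lintegral_mul (p := fun x => gauge S x / c) (by fun_prop) ?_ polarBody_convex
    (polarBody_isCompact h0) (polarBody_neg hneg) hYS hY).trans (by gcongr)
  refine ne_top_of_le_ne_top ?_ hint
  have := hSc.measure_lt_top (μ := volume)
  finiteness

end

/-! ### Volume bounds for coverings and difference bodies -/

section
variable {n : ℕ}

/-- Volume packing: translates of `S / 2` at `S`-separated points of `T` are disjoint and lie in
`(3 / 2) T`. -/
theorem card_mul_volume_le {T S : Set (Euc n)} (hT : Convex ℝ T) (hS : Convex ℝ S)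
    (hSc : IsCompact S) (hneg : ∀ x ∈ S, -x ∈ S) (hST : S ⊆ T)
    (P : Finset (Euc n)) (hPT : ∀ x ∈ P, x ∈ T)
    (hP : ∀ x ∈ P, ∀ y ∈ P, x ≠ y → x - y ∉ S) :
    (P.card : ℝ≥0∞) * volume S ≤ 3 ^ n * volume T := by
  have hdisj : (P : Set (Euc n)).PairwiseDisjoint fun x => x +ᵥ ((1 / 2 : ℝ) • S) := by
    intro x hx y hy hxy
    refine Set.disjoint_left.2 fun z hz1 hz2 => hP x hx y hy hxy ?_
    obtain ⟨_, ⟨s1, hs1, rfl⟩, rfl⟩ := hz1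
    obtain ⟨_, ⟨s2, hs2, rfl⟩, h2⟩ := hz2
    have h3 : y + (1 / 2 : ℝ) • s2 = x + (1 / 2 : ℝ) • s1 := h2
    have h4 : x - y = (1 / 2 : ℝ) • s2 + (1 / 2 : ℝ) • (-s1) := by
      have : x = y + (1 / 2 : ℝ) • s2 - (1 / 2 : ℝ) • s1 := by rw [h3]; abel
      rw [this, smul_neg]; abel
    rw [h4]
    exact hS hs2 (hneg _ hs1) (by norm_num) (by norm_num) (by norm_num)
  have hmeas : ∀ x ∈ P, MeasurableSet (x +ᵥ ((1 / 2 : ℝ) • S)) := fun x _ =>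
    ((hSc.smul (1 / 2 : ℝ)).vadd x).measurableSet
  have hsub : (⋃ x ∈ P, x +ᵥ ((1 / 2 : ℝ) • S)) ⊆ (3 / 2 : ℝ) • T := by
    refine Set.iUnion₂_subset fun x hx => ?_
    rintro _ ⟨_, ⟨s1, hs1, rfl⟩, rfl⟩
    refine ⟨(2 / 3 : ℝ) • x + (1 / 3 : ℝ) • s1,
      hT (hPT x hx) (hST hs1) (by norm_num) (by norm_num) (by norm_num), ?_⟩
    change (3 / 2 : ℝ) • ((2 / 3 : ℝ) • x + (1 / 3 : ℝ) • s1) = x + (1 / 2 : ℝ) • s1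
    module
  have h1 := measure_mono (μ := volume) hsub
  rw [measure_biUnion_finset hdisj hmeas] at h1
  simp only [measure_vadd, Measure.addHaar_smul, finrank_euclideanSpace_fin, Finset.sum_const,
    nsmul_eq_mul] at h1
  rw [abs_of_nonneg (by positivity), abs_of_nonneg (by positivity)] at h1
  have h2 : (2 : ℝ≥0∞) ^ n * (P.card * (ENNReal.ofReal ((1 / 2) ^ n) * volume S))
      = P.card * volume S := by
    have : (2 : ℝ≥0∞) ^ n * ENNReal.ofReal ((1 / 2) ^ n) = 1 := by
      rw [← ENNReal.ofReal_ofNat, ← ENNReal.ofReal_pow (by norm_num),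
        ← ENNReal.ofReal_mul (by positivity), ← mul_pow]
      norm_num
    calc _ = (2 : ℝ≥0∞) ^ n * ENNReal.ofReal ((1 / 2) ^ n) * (P.card * volume S) := by ring
      _ = _ := by rw [this, one_mul]
  have h3 : (2 : ℝ≥0∞) ^ n * (ENNReal.ofReal ((3 / 2) ^ n) * volume T) = 3 ^ n * volume T := by
    rw [← mul_assoc]
    congr 1
    rw [← ENNReal.ofReal_ofNat 2, ← ENNReal.ofReal_pow (by norm_num),
      ← ENNReal.ofReal_mul (by positivity), ← mul_pow, ← ENNReal.ofReal_ofNat 3,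
      ← ENNReal.ofReal_pow (by norm_num)]
    norm_num
  rw [← h2, ← h3]
  gcongr

/-- A maximal `S`-separated subset of `T` yields a covering, and volume comparison bounds its
cardinality. -/
theorem exists_cover {T S : Set (Euc n)} (hT : Convex ℝ T) (hTc : IsCompact T)
    (hS : Convex ℝ S) (hSc : IsCompact S) (hneg : ∀ x ∈ S, -x ∈ S)
    (h0 : S ∈ nhds (0 : Euc n)) (hST : S ⊆ T) :
    ∃ P : Finset (Euc n), T ⊆ ↑P + S ∧ (P.card : ℝ≥0∞) * volume S ≤ 3 ^ n * volume T := by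
  classical
  by_contra! hno
  have hz : (0 : Euc n) ∈ S := mem_of_mem_nhds h0
  have hex : ∀ k : ℕ, ∃ P : Finset (Euc n), P.card = k ∧ (∀ x ∈ P, x ∈ T) ∧
      ∀ x ∈ P, ∀ y ∈ P, x ≠ y → x - y ∉ S := by
    intro k
    induction k with
    | zero => exact ⟨∅, rfl, by simp, by simp⟩
    | succ k ih =>
      obtain ⟨P, hk, hPT, hP⟩ := ih
      have hncov : ¬ T ⊆ ↑P + S := fun h =>
        absurd (card_mul_volume_le hT hS hSc hneg hST P hPT hP) (not_le.2 (hno P h))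
      obtain ⟨z, hzT, hzn⟩ := Set.not_subset.1 hncov
      have hz1 : ∀ x ∈ P, z - x ∉ S := fun x hx hm =>
        hzn ⟨x, hx, z - x, hm, add_sub_cancel x z⟩
      have hzP : z ∉ P := fun h => hz1 z h (by rwa [sub_self])
      refine ⟨insert z P, by rw [Finset.card_insert_of_notMem hzP, hk], ?_, ?_⟩
      · intro x hx
        rcases Finset.mem_insert.1 hx with rfl | hx
        · exact hzT
        · exact hPT x hx
      · intro x hx y hy hxy
        rcases Finset.mem_insert.1 hx with rfl | hx' <;> rcases Finset.mem_insert.1 hy with rfl | hy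
        · exact absurd rfl hxy
        · exact hz1 y hy
        · intro hm
          exact hz1 x hx' (by simpa using hneg _ hm)
        · exact hP x hx' y hy hxy
  have hvS : volume S ≠ 0 := (Measure.measure_pos_of_mem_nhds volume h0).ne'
  have hfin : 3 ^ n * volume T / volume S ≠ ⊤ :=
    ENNReal.div_ne_top (ENNReal.mul_ne_top (by finiteness) hTc.measure_lt_top.ne) hvS
  obtain ⟨k, hk⟩ := ENNReal.exists_nat_gt hfin
  obtain ⟨P, hPk, hPT, hP⟩ := hex k
  have := card_mul_volume_le hT hS hSc hneg hST P hPT hP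
  rw [hPk, ← ENNReal.le_div_iff_mul_le (Or.inl hvS) (Or.inl hSc.measure_lt_top.ne)] at this
  exact absurd hk (not_lt.2 this)

/-- If translates of `B` cover `A`, the same translates of `2 B` cover `A + B`. -/
theorem volume_add_le_of_cover {A B : Set (Euc n)} (hB : Convex ℝ B) (P : Finset (Euc n))
    (h : A ⊆ ↑P + B) : volume (A + B) ≤ P.card * (2 ^ n * volume B) := by
  have hsub : A + B ⊆ ⋃ x ∈ P, x +ᵥ ((2 : ℝ) • B) := by
    rintro _ ⟨a, ha, b, hb, rfl⟩
    obtain ⟨x, hx, b1, hb1, rfl⟩ := h ha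
    refine Set.mem_iUnion₂.2 ⟨x, hx, (2 : ℝ) • ((1 / 2 : ℝ) • b1 + (1 / 2 : ℝ) • b),
      ⟨_, hB hb1 hb (by norm_num) (by norm_num) (by norm_num), rfl⟩, ?_⟩
    change x + (2 : ℝ) • ((1 / 2 : ℝ) • b1 + (1 / 2 : ℝ) • b) = x + b1 + b
    module
  refine (measure_mono hsub).trans ((measure_biUnion_finset_le _ _).trans (le_of_eq ?_))
  simp only [measure_vadd, Measure.addHaar_smul, finrank_euclideanSpace_fin, Finset.sum_const,
    nsmul_eq_mul]
  rw [abs_of_nonneg (by positivity), ENNReal.ofReal_pow (by norm_num), ENNReal.ofReal_ofNat]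

theorem isCompact_sub {A B : Set (Euc n)} (hA : IsCompact A) (hB : IsCompact B) :
    IsCompact (A - B) := by
  rw [sub_eq_add_neg]
  exact hA.add hB.neg

/-- A weak form of the Rogers–Shephard inequality. If `x` lies in half the difference body, then
`M ∩ (x + M)` contains a translate of `M / 2`; integrating over `x` gives the bound. -/
theorem volume_sub_le {M : Set (Euc n)} (hM : Convex ℝ M) (hMc : IsCompact M)
    (h0 : volume M ≠ 0) : volume (M - M) ≤ 4 ^ n * volume M := by
  have hMm : MeasurableSet M := hMc.measurableSet
  have hfin : volume M ≠ ⊤ := hMc.measure_lt_top.ne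
  have hconv : ∫⁻ x : Euc n, volume (M ∩ (x +ᵥ M)) = volume M * volume M := by
    have e1 : ∀ x : Euc n, volume (M ∩ (x +ᵥ M))
        = ∫⁻ y, M.indicator 1 y * M.indicator 1 (y - x) := by
      intro x
      rw [← lintegral_indicator_one (hMm.inter (hMc.vadd x).measurableSet)]
      refine lintegral_congr fun y => ?_
      have : y ∈ x +ᵥ M ↔ y - x ∈ M := by
        rw [Set.mem_vadd_set_iff_neg_vadd_mem, vadd_eq_add, neg_add_eq_sub]
      by_cases h1 : y ∈ M <;> by_cases h2 : y - x ∈ M <;> simp [Set.indicator, this, h1, h2]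
    have hme : Measurable (M.indicator (1 : Euc n → ℝ≥0∞)) := measurable_one.indicator hMm
    simp_rw [e1]
    rw [lintegral_lintegral_swap (by
      refine Measurable.aemeasurable ?_
      exact (hme.comp measurable_snd).mul (hme.comp (measurable_snd.sub measurable_fst)))]
    have e2 : ∀ y : Euc n, ∫⁻ x, M.indicator 1 y * M.indicator 1 (y - x)
        = M.indicator 1 y * volume M := by
      intro y
      rw [lintegral_const_mul _ (by fun_prop),
        lintegral_sub_left_eq_self (fun z => M.indicator (1 : Euc n → ℝ≥0∞) z) y,
        lintegral_indicator_one hMm]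
    simp_rw [e2]
    rw [lintegral_mul_const _ hme, lintegral_indicator_one hMm]
  have hlow : ∀ x ∈ (1 / 2 : ℝ) • (M - M),
      ENNReal.ofReal ((1 / 2) ^ n) * volume M ≤ volume (M ∩ (x +ᵥ M)) := by
    rintro _ ⟨_, ⟨u, hu, v, hv, rfl⟩, rfl⟩
    have e : volume (((1 / 2 : ℝ) • u) +ᵥ ((1 / 2 : ℝ) • M))
        = ENNReal.ofReal ((1 / 2) ^ n) * volume M := by
      rw [measure_vadd, Measure.addHaar_smul, finrank_euclideanSpace_fin,
        abs_of_nonneg (by positivity)]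
    rw [← e]
    refine measure_mono ?_
    rintro _ ⟨_, ⟨w, hw, rfl⟩, rfl⟩
    refine ⟨hM hu hw (by norm_num) (by norm_num) (by norm_num),
      (1 / 2 : ℝ) • v + (1 / 2 : ℝ) • w,
      hM hv hw (by norm_num) (by norm_num) (by norm_num), ?_⟩
    change (1 / 2 : ℝ) • (u - v) + ((1 / 2 : ℝ) • v + (1 / 2 : ℝ) • w)
      = (1 / 2 : ℝ) • u + (1 / 2 : ℝ) • w
    module
  have hmeas : MeasurableSet ((1 / 2 : ℝ) • (M - M)) :=
    ((isCompact_sub hMc hMc).smul (1 / 2 : ℝ)).measurableSet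
  have h1 : ENNReal.ofReal ((1 / 2) ^ n) * volume M * volume ((1 / 2 : ℝ) • (M - M))
      ≤ volume M * volume M := by
    rw [← hconv, ← setLIntegral_const]
    exact (setLIntegral_mono' hmeas hlow).trans (setLIntegral_le_lintegral _ _)
  rw [Measure.addHaar_smul, finrank_euclideanSpace_fin, abs_of_nonneg (by positivity)] at h1
  have h2 : (4 : ℝ≥0∞) ^ n * (ENNReal.ofReal ((1 / 2) ^ n) * ENNReal.ofReal ((1 / 2) ^ n)) = 1 := by
    rw [← ENNReal.ofReal_mul (by positivity), ← mul_pow, ← ENNReal.ofReal_ofNat,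
      ← ENNReal.ofReal_pow (by norm_num), ← ENNReal.ofReal_mul (by positivity), ← mul_pow]
    norm_num
  refine (ENNReal.mul_le_mul_iff_right h0 hfin).1 ?_
  calc volume M * volume (M - M)
      = 4 ^ n * (ENNReal.ofReal ((1 / 2) ^ n) * ENNReal.ofReal ((1 / 2) ^ n))
        * (volume M * volume (M - M)) := by rw [h2, one_mul]
    _ = 4 ^ n * (ENNReal.ofReal ((1 / 2) ^ n) * volume M
        * (ENNReal.ofReal ((1 / 2) ^ n) * volume (M - M))) := by ring
    _ ≤ 4 ^ n * (volume M * volume M) := by gcongr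
    _ = _ := by ring

end

/-! ### Comparison of covering numbers -/

section
variable {n : ℕ}

theorem symm_mem_nhds {T : Set (Euc n)} (hT : IsConvexBody T) (hsymm : T = -T) :
    T ∈ nhds (0 : Euc n) := by
  obtain ⟨hconv, -, x, hx⟩ := hT
  have hx' : -x ∈ interior T := by
    rw [hsymm]
    have : interior (-T) = -interior T := ((Homeomorph.neg (Euc n)).preimage_interior T).symm
    rw [this]
    simpa using hx
  have := hconv.interior hx hx' (a := 1 / 2) (b := 1 / 2) (by norm_num) (by norm_num) (by norm_num)
  rw [smul_neg, add_neg_cancel] at this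
  exact mem_interior_iff_mem_nhds.1 this

/-- If the polar of a closed convex set containing the origin is bounded, the origin is an interior
point. -/
theorem mem_nhds_of_polarBody_bounded {K : Set (Euc n)} (hK : Convex ℝ K) (hc : IsClosed K)
    (h0 : (0 : Euc n) ∈ K) {R : ℝ} (hR : 0 < R) (h : ∀ y ∈ polarBody K, ‖y‖ ≤ R) :
    K ∈ nhds (0 : Euc n) := by
  refine Filter.mem_of_superset (Metric.closedBall_mem_nhds (0 : Euc n) (inv_pos.2 hR)) ?_
  refine fun x hx => bipolar_subset hK hc h0 fun y hy => ?_
  rw [mem_closedBall_zero_iff] at hx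
  calc ⟪x, y⟫ ≤ ‖x‖ * ‖y‖ := real_inner_le_norm _ _
    _ ≤ R⁻¹ * R := mul_le_mul hx (h y hy) (norm_nonneg _) (by positivity)
    _ = 1 := inv_mul_cancel₀ hR.ne'

/-- The quantitative core: a finite cover of `K*` by translates of `T*` produces a cover of `T` by
translates of `K`. The set covered with is `S = K ∩ -K ∩ T`, whose polar lies in the difference
body of `K* + T*`. -/
theorem exists_cover_of_polar_cover (hn : 3 ≤ n) {K T : Set (Euc n)} (hK : IsConvexBody K)
    (hT : IsConvexBody T) (hK0 : (0 : Euc n) ∈ K) (hsymm : T = -T) (Q : Finset (Euc n))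
    (hQ : polarBody K ⊆ ↑Q + polarBody T) :
    ∃ P : Finset (Euc n), T ⊆ ↑P + K ∧ P.card ≤ 49 ^ n * Q.card := by
  obtain ⟨hKc, hKk, -⟩ := hK
  have hTn := symm_mem_nhds hT hsymm
  obtain ⟨hTc, hTk, -⟩ := hT
  have hTneg : ∀ x ∈ T, -x ∈ T := fun x hx => by rw [hsymm]; simpa using hx
  have hT'k := polarBody_isCompact hTn
  have hK'b : IsCompact (polarBody K) :=
    (Q.finite_toSet.isCompact.add hT'k).of_isClosed_subset polarBody_isClosed hQ
  obtain ⟨R, hR0, hR⟩ := hK'b.isBounded.exists_pos_norm_le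
  -- `0 ∈ K` alone allows the origin on the boundary; the finite cover of the polar excludes this.
  have hKn := mem_nhds_of_polarBody_bounded hKc hKk.isClosed hK0 hR0 hR
  set S : Set (Euc n) := K ∩ -K ∩ T with hSdef
  have hSc : Convex ℝ S := (hKc.inter hKc.neg).inter hTc
  have hSk : IsCompact S := (hKk.inter hKk.neg).inter hTk
  have hSneg : ∀ x ∈ S, -x ∈ S := fun x hx =>
    ⟨⟨hx.1.2, by simpa using hx.1.1⟩, hTneg x hx.2⟩
  have hKn' : -K ∈ nhds (0 : Euc n) := by
    have : Filter.Tendsto (fun x : Euc n => -x) (nhds 0) (nhds 0) := by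
      simpa using (continuous_neg (G := Euc n)).tendsto 0
    exact this hKn
  have hSn : S ∈ nhds (0 : Euc n) := Filter.inter_mem (Filter.inter_mem hKn hKn') hTn
  set M : Set (Euc n) := polarBody K + polarBody T with hMdef
  have hMc : Convex ℝ M := polarBody_convex.add polarBody_convex
  have hMk : IsCompact M := hK'b.add hT'k
  have hM0 : (0 : Euc n) ∈ M := ⟨0, zero_mem_polarBody, 0, zero_mem_polarBody, add_zero 0⟩
  have hKM : polarBody K ⊆ M := fun x hx => ⟨x, hx, 0, zero_mem_polarBody, add_zero x⟩
  have hTM : polarBody T ⊆ M := fun x hx => ⟨0, zero_mem_polarBody, x, hx, zero_add x⟩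
  -- By duality it is enough that the polar of `M - M` lies in `S`, and `M - M` contains `K*`, `-K*`
  -- and `T*`.
  have hSM : polarBody S ⊆ M - M := by
    refine polarBody_subset_swap (hMc.sub hMc) (isCompact_sub hMk hMk).isClosed
      ⟨0, hM0, 0, hM0, sub_zero 0⟩ fun x hx => ⟨⟨?_, ?_⟩, ?_⟩
    · exact bipolar_subset hKc hKk.isClosed hK0 fun y hy =>
        hx y ⟨y, hKM hy, 0, hM0, sub_zero y⟩
    · refine bipolar_subset hKc hKk.isClosed hK0 fun y hy => ?_
      have := hx (-y) ⟨0, hM0, y, hKM hy, zero_sub y⟩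
      rwa [inner_neg_right, ← inner_neg_left] at this
    · exact bipolar_subset hTc hTk.isClosed (mem_of_mem_nhds hTn) fun y hy =>
        hx y ⟨y, hTM hy, 0, hM0, sub_zero y⟩
  have hMv : volume M ≠ 0 := by
    have hTp : volume (polarBody T) ≠ 0 := by
      obtain ⟨r, hr⟩ := hTk.isBounded.exists_pos_norm_le
      have : polarBody T ∈ nhds (0 : Euc n) := by
        refine Filter.mem_of_superset
          (Metric.closedBall_mem_nhds (0 : Euc n) (inv_pos.2 hr.1)) fun x hx y hy => ?_
        rw [mem_closedBall_zero_iff] at hx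
        calc ⟪x, y⟫ ≤ ‖x‖ * ‖y‖ := real_inner_le_norm _ _
          _ ≤ r⁻¹ * r := mul_le_mul hx (hr.2 y hy) (norm_nonneg _) (inv_pos.2 hr.1).le
          _ = 1 := inv_mul_cancel₀ hr.1.ne'
      exact (Measure.measure_pos_of_mem_nhds volume this).ne'
    exact fun h => hTp (measure_mono_null hTM h)
  obtain ⟨P, hPT, hPv⟩ := exists_cover hTc hTk hSc hSk hSneg hSn Set.inter_subset_right
  refine ⟨P, hPT.trans (Set.add_subset_add_left fun x hx => hx.1.1), ?_⟩
  have hpol : volume (polarBody S) ≤ 4 ^ n * (Q.card * (2 ^ n * volume (polarBody T))) :=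
    (measure_mono hSM).trans ((volume_sub_le hMc hMk hMv).trans (by
      gcongr; exact volume_add_le_of_cover polarBody_convex Q hQ))
  have hbm := bourgain_milman hSc hSk hSneg hSn (c := 49 / 48) (by norm_num)
  have hsan := santalo hTk hT'k (polarBody_neg hTneg)
    (fun x hx y hy => by rw [real_inner_comm]; exact hy x hx)
  have hball := factorial_mul_volume_ball_sq hn
  have hpi : (0 : ℝ≥0∞) < ENNReal.ofReal (Real.pi ^ n) :=
    ENNReal.ofReal_pos.2 (by positivity)
  -- `3 * 4 * 2 * 2 = 48`, from packing, difference body, covering and the volume products; the factor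
  -- `49 / 48` is the loss allowed in the Bourgain–Milman bound.
  have hnum : (3 : ℝ≥0∞) ^ n * 4 ^ n * 2 ^ n * ENNReal.ofReal ((49 / 48) ^ n)
      * ENNReal.ofReal ((2 * Real.pi) ^ n) = 49 ^ n * ENNReal.ofReal (Real.pi ^ n) := by
    rw [← mul_pow, ← mul_pow, show (3 : ℝ≥0∞) * 4 * 2 = ENNReal.ofReal 24 by
      rw [ENNReal.ofReal_ofNat]; norm_num, ← ENNReal.ofReal_pow (by norm_num),
      ← ENNReal.ofReal_mul (by positivity), ← ENNReal.ofReal_mul (by positivity),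
      show (49 : ℝ≥0∞) = ENNReal.ofReal 49 by rw [ENNReal.ofReal_ofNat],
      ← ENNReal.ofReal_pow (by norm_num), ← ENNReal.ofReal_mul (by positivity), ← mul_pow,
      ← mul_pow, ← mul_pow]
    congr 2
    ring
  have hmain : (P.card : ℝ≥0∞) * ENNReal.ofReal (Real.pi ^ n)
      ≤ (49 ^ n * Q.card) * ENNReal.ofReal (Real.pi ^ n) := by
    calc (P.card : ℝ≥0∞) * ENNReal.ofReal (Real.pi ^ n)
        ≤ P.card * (n.factorial * (ENNReal.ofReal ((49 / 48) ^ n) * volume S)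
            * (4 ^ n * (Q.card * (2 ^ n * volume (polarBody T))))) := by
          gcongr; exact hbm.trans (by gcongr)
      _ = (P.card * volume S) * (n.factorial * ENNReal.ofReal ((49 / 48) ^ n)
            * (4 ^ n * (Q.card * (2 ^ n * volume (polarBody T))))) := by ring
      _ ≤ (3 ^ n * volume T) * (n.factorial * ENNReal.ofReal ((49 / 48) ^ n)
            * (4 ^ n * (Q.card * (2 ^ n * volume (polarBody T))))) := by gcongr
      _ = 3 ^ n * 4 ^ n * 2 ^ n * ENNReal.ofReal ((49 / 48) ^ n) * Q.card
            * (n.factorial * (volume T * volume (polarBody T))) := by ring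
      _ ≤ 3 ^ n * 4 ^ n * 2 ^ n * ENNReal.ofReal ((49 / 48) ^ n) * Q.card
            * ENNReal.ofReal ((2 * Real.pi) ^ n) := by
          gcongr; exact (mul_le_mul_right hsan _).trans hball
      _ = (3 ^ n * 4 ^ n * 2 ^ n * ENNReal.ofReal ((49 / 48) ^ n)
            * ENNReal.ofReal ((2 * Real.pi) ^ n)) * Q.card := by ring
      _ = _ := by rw [hnum]; ring
  have := (ENNReal.mul_le_mul_iff_left hpi.ne' ENNReal.ofReal_ne_top).1 hmain
  exact_mod_cast this

end

theorem covering_number_dual_entropy_left :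
    ∃ n₀ : ℕ, ∀ n ≥ n₀, ∀ K T : Set (Euc n),
      IsConvexBody K → IsConvexBody T → (0 : Euc n) ∈ K → T = -T →
      coveringNumber T K ≤ 49 ^ n * coveringNumber (polarBody K) (polarBody T) := by
  refine ⟨3, fun n hn K T hK hT hK0 hsymm => ?_⟩
  rcases Set.eq_empty_or_nonempty {m : ℕ∞ | ∃ Λ : Finset (Euc n), (Λ.card : ℕ∞) = m ∧
    polarBody K ⊆ ↑Λ + polarBody T} with h | h
  · have : coveringNumber (polarBody K) (polarBody T) = ⊤ := by
      unfold coveringNumber; rw [h, sInf_empty]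
    rw [this, ENat.mul_top (by positivity)]
    exact le_top
  · obtain ⟨Q, hQc, hQ⟩ := csInf_mem h
    obtain ⟨P, hP, hPQ⟩ := exists_cover_of_polar_cover hn hK hT hK0 hsymm Q hQ
    have h1 : coveringNumber T K ≤ P.card := sInf_le ⟨P, rfl, hP⟩
    have h2 : coveringNumber (polarBody K) (polarBody T) = Q.card := hQc.symm
    rw [h2]
    refine h1.trans ?_
    exact_mod_cast hPQ

end
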